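/- arXiv:1701.07716 — 3 statements merged into one kernel-verified Lean document; each statement's English description precedes it below -/
import Mathlib

section
/- Let R be a commutative noetherian ring and 𝔞 an ideal of R. If f : M → N is an R-homomorphism between 𝔞-cofinite R-modules and cd(𝔞,R) ≤ 1, then coker f is 𝔞-cofinite. -/
open CategoryTheory

/-- An `R`-module `M` is `I`-cofinite if its support is contained in `V(I)` and
`Ext^i_R(R/I, M)` is a finitely generated `R`-module for every `i ≥ 0`. -/
def IsCofinite {R : Type} [CommRing R] (I : Ideal R) (M : Type) [AddCommGroup M]
    [Module R M] : Prop :=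
  Module.support R M ⊆ PrimeSpectrum.zeroLocus (I : Set R) ∧
  ∀ i : ℕ, Module.Finite R
    (((Ext R (ModuleCat R) i).obj (Opposite.op (ModuleCat.of R (R ⧸ I)))).obj
      (ModuleCat.of R M))

/-!
Write `φ : Rᵏ → R` for a linear form with image `I`. Since `cd(I, R) ≤ 1`, the systems
`Ext^i(Iⁿ, R)`, `i ≥ 1`, die in the colimit over `n`; peeling off the Koszul complex of `φ`, so do
the systems `Ext¹(Iⁿ, ker φ)`. Hence some inclusion `Iⁿ → R` lifts along `φ`, which says that it
lies in `I • Hom(Iⁿ, R)`. For every module `C` the multiplication `C ⊗ Iⁿ → C` then lies in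
`I • Hom(C ⊗ Iⁿ, C)`, so it induces zero on `Ext(R ⧸ I, -)`. If moreover `IC = C` and
`ker (C ⊗ I → C) = Tor₁(C, R ⧸ I)` is finitely generated, then `C ⊗ Iⁿ → C` is surjective with
finitely generated kernel, and `Extⁱ(R ⧸ I, C)` embeds in `Extⁱ⁺¹` of that kernel.

For `f : M → N` as in the theorem, `M ⧸ IM`, `N ⧸ IN` and `Tor₁(N, R ⧸ I)` are finitely generated,
by the Koszul complex again, hence so is `Tor₁(coker f, R ⧸ I)`. Adding finitely many generators to
`M` makes `IC = C` for the cokernel `C`, and changes the cokernel only by a finitely generated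
module.
-/

namespace CofiniteModule

open Abelian (Ext)

universe w v u

section ExtComparison

section HomologicalComplex

variable {R : Type*} [Ring R] {ι : Type*} {c : ComplexShape ι}
  (K : HomologicalComplex (ModuleCat.{v} R) c)

lemma iCycles_injective (i : ι) : Function.Injective (K.iCycles i) :=
  (ModuleCat.mono_iff_injective _).1 inferInstance

lemma exists_iCycles_eq {i : ι} (x : K.X i) (hx : K.d i (c.next i) x = 0) :
    ∃ z, K.iCycles i z = x :=
  (ShortComplex.moduleCat_exact_iff _).1
    (ShortComplex.exact_of_f_is_kernel (ShortComplex.mk _ _ (K.iCycles_d i (c.next i)))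
      (K.cyclesIsKernel i _ rfl)) x hx

lemma homologyπ_surjective (i : ι) : Function.Surjective (K.homologyπ i) :=
  (ModuleCat.epi_iff_surjective _).1 inferInstance

lemma homologyπ_eq_zero_iff {i : ι} (z : K.cycles i) :
    K.homologyπ i z = 0 ↔ ∃ x, K.d (c.prev i) i x = K.iCycles i z := by
  have exact : (ShortComplex.mk _ _ (K.toCycles_comp_homologyπ (c.prev i) i)).Exact :=
    ShortComplex.exact_of_g_is_cokernel _ (K.homologyIsCokernel _ i rfl)
  have toCycles_i (x : K.X (c.prev i)) :
      K.iCycles i (K.toCycles (c.prev i) i x) = K.d (c.prev i) i x :=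
    ConcreteCategory.congr_hom (K.toCycles_i (c.prev i) i) x
  simp only [← toCycles_i, (iCycles_injective K i).eq_iff]
  refine ⟨(ShortComplex.moduleCat_exact_iff _).1 exact z, ?_⟩
  rintro ⟨x, rfl⟩
  exact ConcreteCategory.congr_hom (K.toCycles_comp_homologyπ (c.prev i) i) x

end HomologicalComplex

variable {R : Type*} [Ring R] {C : Type u} [Category.{v} C] [Abelian C] [Linear R C]
  {X X' Y : C} (P : ProjectiveResolution X) (P' : ProjectiveResolution X')

/-- An `n`-cocycle of the cochain complex `Hom(P, Y)`, as a morphism. -/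
noncomputable def cocycleHom (Y : C) (n : ℕ) :
    (P.complex.linearYonedaObj R Y).cycles n →ₗ[R] (P.complex.X n ⟶ Y) :=
  ((P.complex.linearYonedaObj R Y).iCycles n).hom

lemma d_comp_cocycleHom {n : ℕ} (z : (P.complex.linearYonedaObj R Y).cycles n) :
    P.complex.d (n + 1) n ≫ cocycleHom P Y n z = 0 :=
  ConcreteCategory.congr_hom ((P.complex.linearYonedaObj R Y).iCycles_d n (n + 1)) z

variable {P P'}

/-- The map `Hom(P, Y) ⟶ Hom(P', Y)` given by precomposition with a morphism of complexes
`P' ⟶ P`. -/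
noncomputable def precompComplex (φ : P'.complex ⟶ P.complex) (Y : C) :
    P.complex.linearYonedaObj R Y ⟶ P'.complex.linearYonedaObj R Y :=
  (HomologicalComplex.unopFunctor _ _).map
    ((((linearYoneda R C).obj Y).rightOp.mapHomologicalComplex _).map φ).op

lemma isoExt_hom_naturality [EnoughProjectives C] {g : X' ⟶ X}
    (φ : ProjectiveResolution.Hom P' P g) (n : ℕ) :
    ((_root_.Ext R C n).map g.op).app Y ≫ (P'.isoExt n Y).hom =
      (P.isoExt n Y).hom ≫ HomologicalComplex.homologyMap (precompComplex φ.hom Y) n := by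
  have unop_naturality := congrArg Quiver.Hom.unop
    (HomologicalComplex.homologyOp_hom_naturality (precompComplex (R := R) φ.hom Y) n)
  have leftDerived_naturality := congrArg Quiver.Hom.unop
    (ProjectiveResolution.isoLeftDerivedObj_hom_naturality g P' P φ.hom
      (φ.hom_f_zero_comp_π_f_zero.trans (by simp)) ((linearYoneda R C).obj Y).rightOp n)
  rw [← Iso.eq_comp_inv, Category.assoc, ← Iso.inv_comp_eq]
  exact CommSq.w (CommSq.horiz_comp ⟨unop_naturality⟩ ⟨leftDerived_naturality⟩)

variable (P) [HasExt.{w} C]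

open CochainComplex.HomComplex in
lemma extMk_zero_eq_zero_iff (f : P.complex.X 0 ⟶ Y) (hf : P.complex.d 1 0 ≫ f = 0) :
    P.extMk f 1 rfl hf = 0 ↔ f = 0 := by
  refine ⟨fun h ↦ ?_, by rintro rfl; simp⟩
  simp only [← P.extEquivCohomologyClass.apply_eq_iff_eq,
    P.extEquivCohomologyClass_extMk, P.extEquivCohomologyClass_zero,
    CohomologyClass.mk_eq_zero_iff] at h
  obtain ⟨g, hg⟩ := (Cocycle.toSingleMk_mem_coboundaries_iff _ _ _ _ _ 1 (by simp)).1 h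
  have hg0 : g = 0 := (HomologicalComplex.isZero_extend_X _ _ _ (by simp; lia)).eq_of_src _ _
  rw [hg0, Limits.comp_zero] at hg
  rw [← cancel_epi (P.cochainComplexXIso (-(0 : ℕ)) 0 rfl).hom, ← hg, Limits.comp_zero]

/-- The class in `Ext X Y n` of an `n`-cocycle of the cochain complex `Hom(P, Y)`, where `P` is a
projective resolution of `X`. -/
noncomputable def cocycleClass (Y : C) (n : ℕ) :
    (P.complex.linearYonedaObj R Y).cycles n →ₗ[R] Ext X Y n where
  toFun z := P.extMk (cocycleHom P Y n z) (n + 1) rfl (d_comp_cocycleHom P z)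
  map_add' z z' := by simp only [P.add_extMk, map_add]
  map_smul' r z := by
    simp only [RingHom.id_apply, Ext.smul_eq_comp_mk₀, P.extMk_comp_mk₀, map_smul,
      Linear.comp_smul, Category.comp_id]

lemma cocycleClass_surjective (n : ℕ) :
    Function.Surjective (cocycleClass (R := R) P Y n) := by
  intro e
  obtain ⟨f, hf, rfl⟩ := P.extMk_surjective e (n + 1) rfl
  obtain ⟨z, rfl⟩ := exists_iCycles_eq (P.complex.linearYonedaObj R Y) (i := n) f (by
    rw [CochainComplex.next]; exact hf)
  exact ⟨z, rfl⟩

lemma cocycleClass_eq_zero_iff {n : ℕ} (z : (P.complex.linearYonedaObj R Y).cycles n) :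
    cocycleClass P Y n z = 0 ↔ (P.complex.linearYonedaObj R Y).homologyπ n z = 0 := by
  rw [homologyπ_eq_zero_iff]
  cases n with
  | zero =>
    refine (extMk_zero_eq_zero_iff P _ (d_comp_cocycleHom P z)).trans ?_
    rw [(P.complex.linearYonedaObj R Y).shape _ _ (by simp)]
    exact ⟨fun h ↦ ⟨0, h.symm⟩, fun ⟨_, h⟩ ↦ h.symm⟩
  | succ n =>
    rw [CochainComplex.prev_nat_succ]
    exact P.extMk_eq_zero_iff _ _ rfl (d_comp_cocycleHom P z) n rfl

/-- `Ext` as defined via the derived category is computed by a projective resolution. -/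
noncomputable def homologyEquivExt (Y : C) (n : ℕ) :
    (P.complex.linearYonedaObj R Y).homology n ≃ₗ[R] Ext X Y n :=
  (((P.complex.linearYonedaObj R Y).homologyπ n).hom.quotKerEquivOfSurjective
      (homologyπ_surjective _ n)).symm ≪≫ₗ
    Submodule.quotEquivOfEq _ _ (by ext z; exact (cocycleClass_eq_zero_iff P z).symm) ≪≫ₗ
    (cocycleClass P Y n).quotKerEquivOfSurjective (cocycleClass_surjective P n)

lemma homologyEquivExt_homologyπ {n : ℕ} (z : (P.complex.linearYonedaObj R Y).cycles n) :
    homologyEquivExt P Y n ((P.complex.linearYonedaObj R Y).homologyπ n z) =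
      cocycleClass P Y n z := by
  rw [homologyEquivExt, LinearEquiv.trans_apply, LinearEquiv.trans_apply]
  have : (((P.complex.linearYonedaObj R Y).homologyπ n).hom.quotKerEquivOfSurjective
      (homologyπ_surjective _ n)).symm ((P.complex.linearYonedaObj R Y).homologyπ n z) =
      Submodule.Quotient.mk z := (LinearEquiv.symm_apply_eq _).2 rfl
  rw [this]
  rfl

variable {P}

lemma cocycleClass_cyclesMap_precompComplex {g : X' ⟶ X} (φ : ProjectiveResolution.Hom P' P g)
    {n : ℕ} (z : (P.complex.linearYonedaObj R Y).cycles n) :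
    cocycleClass P' Y n (HomologicalComplex.cyclesMap (precompComplex φ.hom Y) n z) =
      (Ext.mk₀ g).comp (cocycleClass P Y n z) (zero_add n) := by
  have cocycleHom_cyclesMap :
      cocycleHom P' Y n (HomologicalComplex.cyclesMap (precompComplex φ.hom Y) n z) =
        φ.hom.f n ≫ cocycleHom P Y n z :=
    ConcreteCategory.congr_hom (HomologicalComplex.cyclesMap_i (precompComplex φ.hom Y) n) z
  refine Eq.trans ?_ (P.mk₀_comp_extMk _ _ rfl (d_comp_cocycleHom P z) φ).symm
  simp only [cocycleClass, LinearMap.coe_mk, AddHom.coe_mk, cocycleHom_cyclesMap]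

lemma homologyEquivExt_homologyMap_precompComplex {g : X' ⟶ X}
    (φ : ProjectiveResolution.Hom P' P g) {n : ℕ} (e : (P.complex.linearYonedaObj R Y).homology n) :
    homologyEquivExt P' Y n (HomologicalComplex.homologyMap (precompComplex φ.hom Y) n e) =
      (Ext.mk₀ g).comp (homologyEquivExt P Y n e) (zero_add n) := by
  obtain ⟨z, rfl⟩ := homologyπ_surjective _ n e
  rw [homologyEquivExt_homologyπ, ← cocycleClass_cyclesMap_precompComplex,
    ← homologyEquivExt_homologyπ]
  exact congrArg (homologyEquivExt P' Y n) (ConcreteCategory.congr_hom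
    (HomologicalComplex.homologyπ_naturality (precompComplex φ.hom Y) n) z)

variable [EnoughProjectives C]

/-- The comparison between `Ext` as a derived functor and `Ext` as defined via the derived
category. -/
noncomputable def extEquiv (R : Type*) [Ring R] [Linear R C] (X Y : C) (n : ℕ) :
    ((_root_.Ext R C n).obj (.op X)).obj Y ≃ₗ[R] Ext X Y n :=
  ((projectiveResolution X).isoExt n Y).toLinearEquiv ≪≫ₗ
    homologyEquivExt (projectiveResolution X) Y n

lemma extEquiv_map_op_app (g : X' ⟶ X) (Y : C) {n : ℕ}
    (e : ((_root_.Ext R C n).obj (.op X)).obj Y) :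
    extEquiv R X' Y n (((_root_.Ext R C n).map g.op).app Y e) =
      (Ext.mk₀ g).comp (extEquiv R X Y n e) (zero_add n) := by
  let P := projectiveResolution X
  let P' := projectiveResolution X'
  let φ : ProjectiveResolution.Hom P' P g :=
    ⟨ProjectiveResolution.lift g P' P,
      (ProjectiveResolution.lift_commutes_zero g P' P).trans (by simp)⟩
  have isoExt_map := ConcreteCategory.congr_hom (isoExt_hom_naturality (R := R) (Y := Y) φ n) e
  rw [extEquiv, extEquiv, LinearEquiv.trans_apply, LinearEquiv.trans_apply]
  exact (congrArg (homologyEquivExt P' Y n) isoExt_map).trans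
    (homologyEquivExt_homologyMap_precompComplex φ ((P.isoExt n Y).hom e))

end ExtComparison

lemma extClass_comp_naturality {C : Type u} [Category.{v} C] [Abelian C] [HasExt.{w} C]
    {S T : ShortComplex C} (hS : S.ShortExact) (hT : T.ShortExact) (f : S ⟶ T) {Y : C} {n m : ℕ}
    (e : Ext T.X₁ Y n) (h : 1 + n = m) :
    (Ext.mk₀ f.τ₃).comp (hT.extClass.comp e h) (zero_add m) =
      hS.extClass.comp ((Ext.mk₀ f.τ₁).comp e (zero_add n)) h := by
  rw [← Ext.comp_assoc (a₁₂ := 1) _ _ _ (by lia) (by lia) (by lia),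
    ← hS.extClass_naturality hT f, Ext.comp_assoc_of_second_deg_zero]

section ExtProZero

variable {C : Type u} [Category.{v} C] [Abelian C] [HasExt.{w} C] {J : Type*} [Category* J]

/-- The objects `Y` such that, for all `i ≥ n`, every class in `Ext (D.obj k) Y i` restricts to zero
along some morphism `l ⟶ k` of the diagram `D`; for cofiltered `D`, this says that
`colim Ext (D.obj k) Y i = 0` for all `i ≥ n`. -/
def extProZero (D : J ⥤ C) (n : ℕ) : ObjectProperty C := fun Y ↦
  ∀ ⦃i : ℕ⦄, n ≤ i → ∀ ⦃k : J⦄ (e : Ext (D.obj k) Y i),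
    ∃ (l : J) (f : l ⟶ k), (Ext.mk₀ (D.map f)).comp e (zero_add i) = 0

variable {D : J ⥤ C} {n : ℕ}

instance : (extProZero D n).IsClosedUnderIsomorphisms where
  of_iso {Y Z} φ hY i hi k e := by
    obtain ⟨l, f, hf⟩ := hY hi (e.comp (Ext.mk₀ φ.inv) (add_zero i))
    refine ⟨l, f, ?_⟩
    rw [← Ext.comp_mk₀_id e, ← φ.inv_hom_id, ← Ext.mk₀_comp_mk₀,
      ← Ext.comp_assoc_of_second_deg_zero, ← Ext.comp_assoc_of_third_deg_zero, hf, Ext.zero_comp]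

instance : (extProZero D n).IsClosedUnderExtensions where
  prop_X₂_of_shortExact {S} hS h₁ h₃ i hi k e := by
    obtain ⟨l, f, hf⟩ := h₃ hi (e.comp (Ext.mk₀ S.g) (add_zero i))
    rw [← Ext.comp_assoc_of_third_deg_zero] at hf
    obtain ⟨e', he'⟩ := Ext.covariant_sequence_exact₂ _ hS _ hf
    obtain ⟨m, g, hg⟩ := h₁ hi e'
    refine ⟨m, g ≫ f, ?_⟩
    rw [D.map_comp, ← Ext.mk₀_comp_mk₀_assoc, ← he', ← Ext.comp_assoc_of_third_deg_zero, hg,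
      Ext.zero_comp]

lemma extProZero_X₃ {S : ShortComplex C} (hS : S.ShortExact) (h₁ : extProZero D (n + 1) S.X₁)
    (h₂ : extProZero D n S.X₂) : extProZero D n S.X₃ := by
  intro i hi k e
  obtain ⟨l, f, hf⟩ := h₁ (by lia) (e.comp hS.extClass rfl)
  rw [← Ext.comp_assoc (a₁₂ := i) _ _ _ (by lia) (by lia) (by lia)] at hf
  obtain ⟨e', he'⟩ := Ext.covariant_sequence_exact₃ _ hS _ _ hf
  obtain ⟨m, g, hg⟩ := h₂ hi e'
  refine ⟨m, g ≫ f, ?_⟩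
  rw [D.map_comp, ← Ext.mk₀_comp_mk₀_assoc, ← he', ← Ext.comp_assoc_of_third_deg_zero, hg,
    Ext.zero_comp]

lemma exists_lift_of_extProZero_one {S : ShortComplex C} (hS : S.ShortExact)
    (h₁ : extProZero D 1 S.X₁) {k : J} (f : D.obj k ⟶ S.X₃) :
    ∃ (l : J) (g : l ⟶ k) (s : D.obj l ⟶ S.X₂), s ≫ S.g = D.map g ≫ f := by
  obtain ⟨l, g, hg⟩ := h₁ le_rfl ((Ext.mk₀ f).comp hS.extClass (zero_add 1))
  rw [Ext.mk₀_comp_mk₀_assoc] at hg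
  obtain ⟨e, he⟩ := Ext.covariant_sequence_exact₃ _ hS _ _ hg
  obtain ⟨s, rfl⟩ := Ext.mk₀_bijective _ _ |>.2 e
  refine ⟨l, g, s, (Ext.mk₀_bijective _ _).1 ?_⟩
  rw [← Ext.mk₀_comp_mk₀, he]

end ExtProZero

section LocalCohomology

variable {R : Type u} [CommRing R]

/-- The sequence `B → M → M ⧸ B`. -/
abbrev quotientShortComplex {M : Type u} [AddCommGroup M] [Module R M] (B : Submodule R M) :
    ShortComplex (ModuleCat.{u} R) :=
  ModuleCat.shortComplexOfCompEqZero B.subtype B.mkQ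
    (LinearMap.exact_subtype_mkQ B).linearMap_comp_eq_zero

lemma shortExact_quotientShortComplex {M : Type u} [AddCommGroup M] [Module R M]
    (B : Submodule R M) : (quotientShortComplex B).ShortExact :=
  ModuleCat.shortComplex_shortExact _ (LinearMap.exact_subtype_mkQ B) B.subtype_injective
    B.mkQ_surjective

/-- The diagram of modules underlying a diagram of ideals. -/
def idealModules {J : Type*} [Category* J] (D : J ⥤ Ideal R) : J ⥤ ModuleCat.{u} R where
  obj k := ModuleCat.of R (D.obj k)
  map f := ModuleCat.ofHom (Submodule.inclusion (D.map f).le)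

lemma extProZero_ringModIdeals_of_localCohomology (I : Ideal R) {n : ℕ} {Y : ModuleCat.{u} R}
    (h : ∀ i, n ≤ i → Subsingleton ((localCohomology I i).obj Y)) :
    extProZero (localCohomology.ringModIdeals (localCohomology.idealPowersDiagram I)) n Y := by
  intro i hi k e
  have := h i hi
  let D := localCohomology.diagram (localCohomology.idealPowersDiagram I) i
  let G : ℕᵒᵖᵒᵖ ⥤ ModuleCat.{u} R := D ⋙ (evaluation _ _).obj Y
  let colimitIso : (localCohomology I i).obj Y ≅ Limits.colimit G :=
    Limits.colimitObjIsoColimitCompEvaluation D Y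
  have : Subsingleton (Limits.colimit G : ModuleCat.{u} R) :=
    colimitIso.symm.toLinearEquiv.toEquiv.subsingleton
  let e' : G.obj (.op k) := (extEquiv R _ Y i).symm e
  have := Limits.preservesFilteredColimitsOfSize_shrink.{0, u, 0, u} (forget (ModuleCat.{u} R))
  obtain ⟨l, f, g, hfg⟩ := Limits.Concrete.colimit_exists_of_rep_eq G e' (0 : G.obj (.op k))
    (Subsingleton.elim _ _)
  refine ⟨l.unop, f.unop, ?_⟩
  rw [← (extEquiv R _ Y i).apply_symm_apply e, ← extEquiv_map_op_app,
    LinearEquiv.map_eq_zero_iff]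
  exact hfg.trans (map_zero (G.map g).hom)

lemma extProZero_idealModules_of_ringModIdeals {J : Type v} [SmallCategory J] (D : J ⥤ Ideal R)
    {n : ℕ} {Y : ModuleCat.{u} R} (h : extProZero (localCohomology.ringModIdeals D) (n + 2) Y) :
    extProZero (idealModules D) (n + 1) Y := by
  intro i hi k e
  let S (k : J) := quotientShortComplex (D.obj k)
  have hS (k : J) : (S k).ShortExact := shortExact_quotientShortComplex _
  obtain ⟨l, f, hf⟩ := h (Nat.succ_le_succ hi) ((hS k).extClass.comp e (add_comm 1 i))
  let φ : S l ⟶ S k :=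
    { τ₁ := (idealModules D).map f
      τ₂ := 𝟙 _
      τ₃ := (localCohomology.ringModIdeals D).map f }
  refine ⟨l, f, ?_⟩
  obtain ⟨e', he'⟩ := Ext.contravariant_sequence_exact₁ (hS l) Y _ (add_comm 1 i)
    ((extClass_comp_naturality (hS l) (hS k) φ e (add_comm 1 i)).symm.trans hf)
  have : Projective (S l).X₂ := ModuleCat.projective_of_free (Module.Basis.singleton Unit R)
  refine he'.symm.trans ?_
  obtain ⟨i, rfl⟩ := Nat.exists_eq_add_of_le' (show 1 ≤ i by lia)
  rw [Ext.eq_zero_of_projective e', Ext.comp_zero]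
  rfl

end LocalCohomology

section ArtinRees

variable {R : Type u} [CommRing R]

lemma exists_pow_smul_top_inf_ker_le [IsNoetherianRing R] (I : Ideal R) {F M : Type*}
    [AddCommGroup F] [Module R F] [Module.Finite R F] [AddCommGroup M] [Module R M]
    (π : F →ₗ[R] M) (m : ℕ) :
    ∃ n, (I ^ n • ⊤ : Submodule R F) ⊓ LinearMap.ker π ≤ I ^ m • LinearMap.ker π := by
  obtain ⟨k, hk⟩ := I.exists_pow_inf_eq_pow_smul (LinearMap.ker π)
  refine ⟨m + k, ?_⟩
  rw [hk (m + k) (Nat.le_add_left k m), Nat.add_sub_cancel]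
  exact Submodule.smul_mono le_rfl inf_le_right

lemma smul_top_comp_extClass_comp_eq_zero {J K : Ideal R} {F M : Type u} [AddCommGroup F]
    [Module R F] [AddCommGroup M] [Module R M] {π : F →ₗ[R] M} (hπ : Function.Surjective π)
    (hJK : (J • ⊤ : Submodule R F) ⊓ LinearMap.ker π ≤ K • LinearMap.ker π) {X : ModuleCat.{u} R}
    {n : ℕ} {e : Ext (ModuleCat.of R (LinearMap.ker π)) X n}
    (he : (Ext.mk₀ (ModuleCat.ofHom (K • ⊤ : Submodule R (LinearMap.ker π)).subtype)).comp e
      (zero_add n) = 0) :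
    (Ext.mk₀ (ModuleCat.ofHom (J • ⊤ : Submodule R M).subtype)).comp
      ((LinearMap.shortExact_shortComplexKer hπ).extClass.comp e (add_comm 1 n))
      (zero_add (n + 1)) = 0 := by
  have map_eq : (J • ⊤ : Submodule R F).map π = J • ⊤ := by
    rw [Submodule.map_smul'', Submodule.map_top, LinearMap.range_eq_top.2 hπ]
  let πJ : (J • ⊤ : Submodule R F) →ₗ[R] (J • ⊤ : Submodule R M) :=
    π.restrict fun x hx ↦ map_eq ▸ Submodule.mem_map_of_mem hx
  have hπJ : Function.Surjective πJ := by
    rintro ⟨y, hy⟩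
    obtain ⟨x, hx, rfl⟩ := Submodule.mem_map.1 (map_eq ▸ hy)
    exact ⟨⟨x, hx⟩, rfl⟩
  have mem_ker (x : LinearMap.ker πJ) : x.1.1 ∈ LinearMap.ker π := congrArg Subtype.val x.2
  let ρ : LinearMap.ker πJ →ₗ[R] (K • ⊤ : Submodule R (LinearMap.ker π)) :=
    ((Submodule.subtype _ ∘ₗ Submodule.subtype _).codRestrict _ mem_ker).codRestrict _
      fun x ↦ (Submodule.mem_smul_top_iff _ _ _).2 (hJK ⟨x.1.2, mem_ker x⟩)
  let φ : πJ.shortComplexKer ⟶ π.shortComplexKer :=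
    { τ₁ := ModuleCat.ofHom ρ ≫ ModuleCat.ofHom (Submodule.subtype _)
      τ₂ := ModuleCat.ofHom (Submodule.subtype _)
      τ₃ := ModuleCat.ofHom (Submodule.subtype _) }
  refine (extClass_comp_naturality (LinearMap.shortExact_shortComplexKer hπJ)
    (LinearMap.shortExact_shortComplexKer hπ) φ e (add_comm 1 n)).trans ?_
  rw [← Ext.mk₀_comp_mk₀_assoc, he, Ext.comp_zero, Ext.comp_zero]

lemma exists_pow_smul_top_ext_eq_zero [IsNoetherianRing R] {I : Ideal R} {X : ModuleCat.{u} R}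
    (hX : I ≤ Module.annihilator R X) {n : ℕ} {M : Type u} [AddCommGroup M] [Module R M]
    [Module.Finite R M] (e : Ext (ModuleCat.of R M) X n) :
    ∃ m, (Ext.mk₀ (ModuleCat.ofHom (I ^ m • ⊤ : Submodule R M).subtype)).comp e (zero_add n) =
      0 := by
  induction n generalizing M with
  | zero =>
    obtain ⟨f, rfl⟩ := (Ext.mk₀_bijective _ _).2 e
    refine ⟨1, ?_⟩
    rw [Ext.mk₀_comp_mk₀, Ext.mk₀_eq_zero_iff]
    ext x
    have : (I ^ 1 • ⊤ : Submodule R M) ≤ LinearMap.ker f.hom := by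
      rw [pow_one, Submodule.smul_le]
      intro r hr y _
      rw [LinearMap.mem_ker, map_smul, Module.mem_annihilator.1 (hX hr)]
    exact this x.2
  | succ n ih =>
    obtain ⟨k, π, hπ⟩ := Module.Finite.exists_fin' R M
    have hS := π.shortExact_shortComplexKer hπ
    have : Projective π.shortComplexKer.X₂ := ModuleCat.projective_of_free (Pi.basisFun R (Fin k))
    obtain ⟨e, rfl⟩ := Ext.contravariant_sequence_exact₃ hS X e
      (Ext.eq_zero_of_projective _) (add_comm 1 n)
    obtain ⟨m, hm⟩ := ih e
    obtain ⟨l, hl⟩ := exists_pow_smul_top_inf_ker_le I π m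
    exact ⟨l, smul_top_comp_extClass_comp_eq_zero hπ hl hm⟩

lemma extProZero_idealModules_of_le_annihilator [IsNoetherianRing R] {I : Ideal R}
    {X : ModuleCat.{u} R} (hX : I ≤ Module.annihilator R X) (n : ℕ) :
    extProZero (idealModules (localCohomology.idealPowersDiagram I)) n X := by
  rintro i _ ⟨k⟩ (e : Ext (ModuleCat.of R ↥(I ^ k)) X i)
  obtain ⟨m, hm⟩ := exists_pow_smul_top_ext_eq_zero hX e
  have pow_le : I ^ (m + k) ≤ I ^ k := Ideal.pow_le_pow_right (Nat.le_add_left k m)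
  have mem_smul_top (x : ↥(I ^ (m + k))) :
      Submodule.inclusion pow_le x ∈ (I ^ m • ⊤ : Submodule R ↥(I ^ k)) := by
    rw [Submodule.mem_smul_top_iff, smul_eq_mul, ← pow_add]
    exact x.2
  refine ⟨.op (m + k), (homOfLE (Nat.le_add_left k m)).op,
    (Ext.mk₀_comp_mk₀_assoc (ModuleCat.ofHom (LinearMap.codRestrict _ _ mem_smul_top))
      (ModuleCat.ofHom (Submodule.subtype _)) e).symm.trans ?_⟩
  rw [hm, Ext.comp_zero]
  rfl

end ArtinRees

section Koszul

open scoped TensorProduct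

variable {R : Type*} [CommRing R] {F : Type*} [AddCommGroup F] [Module R F]

lemma ι_mul_mem_exteriorPower (v : F) {n : ℕ} {x : ExteriorAlgebra R F} (hx : x ∈ ⋀[R]^n F) :
    ExteriorAlgebra.ι R v * x ∈ ⋀[R]^(n + 1) F := by
  rw [ExteriorAlgebra.exteriorPower, pow_succ']
  exact Submodule.mul_mem_mul ⟨v, rfl⟩ hx

lemma contractLeft_mem_exteriorPower (φ : Module.Dual R F) (n : ℕ) {x : ExteriorAlgebra R F}
    (hx : x ∈ ⋀[R]^(n + 1) F) : CliffordAlgebra.contractLeft φ x ∈ ⋀[R]^n F := by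
  induction n generalizing x with
  | zero =>
    obtain ⟨v, rfl⟩ : x ∈ LinearMap.range (ExteriorAlgebra.ι R) := by simpa using hx
    rw [ExteriorAlgebra.ι, CliffordAlgebra.contractLeft_ι, ExteriorAlgebra.exteriorPower, pow_zero]
    exact Submodule.algebraMap_mem _
  | succ n ih =>
    rw [ExteriorAlgebra.exteriorPower, pow_succ'] at hx
    refine Submodule.mul_induction_on hx ?_ fun x y hx hy ↦ ?_
    · rintro _ ⟨v, rfl⟩ y hy
      rw [ExteriorAlgebra.ι, CliffordAlgebra.contractLeft_ι_mul]
      exact sub_mem (Submodule.smul_mem _ _ hy) (ι_mul_mem_exteriorPower v (ih hy))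
    · rw [map_add]
      exact add_mem hx hy

/-- The differential of the Koszul complex of a linear form `φ` on `F`. -/
def koszulD (φ : Module.Dual R F) (n : ℕ) : ⋀[R]^(n + 1) F →ₗ[R] ⋀[R]^n F :=
  (CliffordAlgebra.contractLeft φ).restrict fun _ ↦ contractLeft_mem_exteriorPower φ n

/-- Exterior multiplication by `v`, the contracting homotopy for `φ v` on the Koszul complex. -/
def wedgeLeft (v : F) (n : ℕ) : ⋀[R]^n F →ₗ[R] ⋀[R]^(n + 1) F :=
  (LinearMap.mulLeft R (ExteriorAlgebra.ι R v)).restrict fun _ ↦ ι_mul_mem_exteriorPower v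

variable (φ : Module.Dual R F)

lemma koszulD_zero_oneEquiv_symm (v : F) :
    koszulD φ 0 ((exteriorPower.oneEquiv R F).symm v) =
      (exteriorPower.zeroEquiv R F).symm (φ v) := by
  have one_symm : (exteriorPower.oneEquiv R F).symm v = exteriorPower.ιMulti R 1 fun _ ↦ v := by
    rw [LinearEquiv.symm_apply_eq, exteriorPower.oneEquiv_ιMulti]
  have zero_symm :
      (exteriorPower.zeroEquiv R F).symm (φ v) = φ v • exteriorPower.ιMulti R 0 ![] := by
    rw [LinearEquiv.symm_apply_eq, map_smul, exteriorPower.zeroEquiv_ιMulti, smul_eq_mul, mul_one]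
  refine Subtype.ext ?_
  rw [one_symm, zero_symm, Submodule.coe_smul, exteriorPower.ιMulti_apply_coe,
    ExteriorAlgebra.ιMulti_zero_apply]
  have coe_one : (exteriorPower.ιMulti R 1 fun _ ↦ v : ExteriorAlgebra R F) =
      CliffordAlgebra.ι (0 : QuadraticForm R F) v := by
    rw [exteriorPower.ιMulti_apply_coe, ExteriorAlgebra.ιMulti_apply]
    exact mul_one _
  rw [← Algebra.algebraMap_eq_smul_one, ← CliffordAlgebra.contractLeft_ι (0 : QuadraticForm R F),
    ← coe_one]
  rfl

lemma koszulD_comp_koszulD (n : ℕ) : koszulD φ n ∘ₗ koszulD φ (n + 1) = 0 :=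
  LinearMap.ext fun x ↦ Subtype.ext (CliffordAlgebra.contractLeft_contractLeft φ x.1)

lemma koszulD_succ_comp_wedgeLeft (v : F) (n : ℕ) :
    koszulD φ (n + 1) ∘ₗ wedgeLeft v (n + 1) =
      φ v • LinearMap.id - wedgeLeft v n ∘ₗ koszulD φ n :=
  LinearMap.ext fun x ↦ Subtype.ext (CliffordAlgebra.contractLeft_ι_mul (Q := 0) φ v x.1)

lemma lTensor_koszulD_comp (M : Type*) [AddCommGroup M] [Module R M] (n : ℕ) :
    (koszulD φ n).lTensor M ∘ₗ (koszulD φ (n + 1)).lTensor M = 0 := by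
  rw [← LinearMap.lTensor_comp, koszulD_comp_koszulD, LinearMap.lTensor_zero]

lemma smul_mem_range_lTensor_koszulD (v : F) {M : Type*} [AddCommGroup M] [Module R M] {n : ℕ}
    {z : M ⊗[R] ⋀[R]^(n + 1) F} (hz : z ∈ LinearMap.ker ((koszulD φ n).lTensor M)) :
    φ v • z ∈ LinearMap.range ((koszulD φ (n + 1)).lTensor M) := by
  refine ⟨(wedgeLeft v (n + 1)).lTensor M z, ?_⟩
  rw [← LinearMap.lTensor_comp_apply, koszulD_succ_comp_wedgeLeft, LinearMap.lTensor_sub,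
    LinearMap.lTensor_smul, LinearMap.lTensor_comp, LinearMap.lTensor_id, LinearMap.sub_apply,
    LinearMap.comp_apply, LinearMap.mem_ker.1 hz, map_zero, sub_zero]
  rfl

lemma subsingleton_exteriorPower [Module.Free R F] [Module.Finite R F] {n : ℕ}
    (hn : Module.finrank R F < n) : Subsingleton (⋀[R]^n F) := by
  cases subsingleton_or_nontrivial R
  · exact Module.subsingleton R _
  rw [← Module.finrank_eq_zero_iff_of_free (R := R), exteriorPower.finrank_eq]
  exact Nat.choose_eq_zero_of_lt hn

end Koszul

section KoszulClosed

variable {R : Type u} [CommRing R]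

lemma prop_fin_pi {P : ObjectProperty (ModuleCat.{u} R)} [P.IsClosedUnderIsomorphisms]
    [P.IsClosedUnderExtensions] [P.ContainsZero] {M : Type u} [AddCommGroup M] [Module R M]
    (hM : P (ModuleCat.of R M)) (k : ℕ) : P (ModuleCat.of R (Fin k → M)) := by
  induction k with
  | zero => exact P.prop_of_isZero (ModuleCat.isZero_of_subsingleton _)
  | succ k ih =>
    exact P.prop_of_iso (Fin.consLinearEquiv R fun _ ↦ M).toModuleIso
      (P.prop_of_iso (ModuleCat.biprodIsoProd _ _) (P.prop_biprod hM ih))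

/-- A class of modules to which the kernels and images of the Koszul complex of `I` with
coefficients in `M` belong as soon as `M` does. -/
structure IsKoszulClosed (I : Ideal R) (P : ObjectProperty (ModuleCat.{u} R)) : Prop extends
    P.IsClosedUnderIsomorphisms, P.IsClosedUnderExtensions, P.ContainsZero where
  prop_X₃ {S : ShortComplex (ModuleCat.{u} R)} : S.ShortExact → P S.X₁ → P S.X₂ → P S.X₃
  prop_of_le_annihilator {X : ModuleCat.{u} R} (hX : P X) {W : Submodule R X} :
    I ≤ W.annihilator → P (ModuleCat.of R W)

namespace IsKoszulClosed

variable {I : Ideal R} {P : ObjectProperty (ModuleCat.{u} R)} (hP : IsKoszulClosed I P)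
  {M : Type u} [AddCommGroup M] [Module R M]

include hP

lemma prop_of_linearEquiv {N : Type u} [AddCommGroup N] [Module R N] (e : M ≃ₗ[R] N)
    (hM : P (ModuleCat.of R M)) : P (ModuleCat.of R N) :=
  have := hP.toIsClosedUnderIsomorphisms
  P.prop_of_iso e.toModuleIso hM

lemma prop_of_smul_le {B Z : Submodule R M} (hBZ : B ≤ Z) (hIZ : I • Z ≤ B)
    (hB : P (ModuleCat.of R B)) (hM : P (ModuleCat.of R M)) : P (ModuleCat.of R Z) := by
  have hW : P (ModuleCat.of R (Z.map B.mkQ)) := by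
    refine hP.prop_of_le_annihilator
      (hP.prop_X₃ (shortExact_quotientShortComplex B) hB hM) fun r hr ↦ ?_
    rw [Submodule.mem_annihilator]
    rintro _ ⟨z, hz, rfl⟩
    rw [← map_smul, Submodule.mkQ_apply, Submodule.Quotient.mk_eq_zero]
    exact hIZ (Submodule.smul_mem_smul hr hz)
  have hker : LinearMap.ker (B.mkQ.submoduleMap Z) = B.submoduleOf Z := by
    ext z
    rw [LinearMap.mem_ker, ← Submodule.coe_eq_zero]
    exact Submodule.Quotient.mk_eq_zero B
  have := hP.toIsClosedUnderExtensions
  refine P.prop_X₂_of_shortExact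
    (LinearMap.shortExact_shortComplexKer (B.mkQ.submoduleMap_surjective Z)) ?_ hW
  exact hP.prop_of_linearEquiv
    ((Submodule.submoduleOfEquivOfLe hBZ).symm ≪≫ₗ LinearEquiv.ofEq _ _ hker.symm) hB

open scoped TensorProduct

lemma prop_tensor {F : Type u} [AddCommGroup F] [Module R F] [Module.Free R F]
    [Module.Finite R F] (hM : P (ModuleCat.of R M)) : P (ModuleCat.of R (M ⊗[R] F)) :=
  have := hP.toIsClosedUnderIsomorphisms
  have := hP.toIsClosedUnderExtensions
  have := hP.toContainsZero
  let b := (Module.Free.chooseBasis R F).reindex (Fintype.equivFin _)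
  hP.prop_of_linearEquiv ((TensorProduct.piScalarRight R R M _).symm ≪≫ₗ
    b.equivFun.symm.lTensor M) (prop_fin_pi hM _)

variable {F : Type u} [AddCommGroup F] [Module R F] [Module.Free R F] [Module.Finite R F]
  {φ : Module.Dual R F}

lemma prop_ker_koszulD_of_prop_range (hφ : I ≤ LinearMap.range φ) (hM : P (ModuleCat.of R M))
    {n : ℕ} (h : P (ModuleCat.of R (LinearMap.range ((koszulD φ (n + 1)).lTensor M)))) :
    P (ModuleCat.of R (LinearMap.ker ((koszulD φ n).lTensor M))) := by
  refine hP.prop_of_smul_le (LinearMap.range_le_ker_iff.2 (lTensor_koszulD_comp φ M n)) ?_ h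
    (hP.prop_tensor hM)
  refine Submodule.smul_le.2 fun r hr z hz ↦ ?_
  obtain ⟨v, rfl⟩ := hφ hr
  exact smul_mem_range_lTensor_koszulD φ v hz

lemma prop_range_of_prop_ker {N : Type u} [AddCommGroup N] [Module R N] (f : M →ₗ[R] N)
    (hM : P (ModuleCat.of R M)) (h : P (ModuleCat.of R (LinearMap.ker f))) :
    P (ModuleCat.of R (LinearMap.range f)) := by
  refine hP.prop_X₃ (LinearMap.shortExact_shortComplexKer f.surjective_rangeRestrict) ?_ hM
  exact hP.prop_of_linearEquiv (LinearEquiv.ofEq _ _ f.ker_rangeRestrict.symm) h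

lemma prop_range_koszulD (hφ : I ≤ LinearMap.range φ) (hM : P (ModuleCat.of R M)) (n : ℕ) :
    P (ModuleCat.of R (LinearMap.range ((koszulD φ n).lTensor M))) := by
  induction h : Module.finrank R F - n generalizing n with
  | zero =>
    have := subsingleton_exteriorPower (R := R) (F := F) (n := n + 1) (by lia)
    have := (LinearMap.surjective_rangeRestrict ((koszulD φ n).lTensor M)).subsingleton
    have := hP.toIsClosedUnderIsomorphisms
    have := hP.toContainsZero
    exact P.prop_of_isZero (ModuleCat.isZero_of_subsingleton _)
  | succ m ih =>
    exact hP.prop_range_of_prop_ker _ (hP.prop_tensor hM)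
      (hP.prop_ker_koszulD_of_prop_range hφ hM (ih (n + 1) (by lia)))

lemma prop_ker_koszulD (hφ : I ≤ LinearMap.range φ) (hM : P (ModuleCat.of R M)) (n : ℕ) :
    P (ModuleCat.of R (LinearMap.ker ((koszulD φ n).lTensor M))) :=
  hP.prop_ker_koszulD_of_prop_range hφ hM (hP.prop_range_koszulD hφ hM (n + 1))

lemma prop_ker_lTensor (hφ : I ≤ LinearMap.range φ) (hM : P (ModuleCat.of R M)) :
    P (ModuleCat.of R (LinearMap.ker (φ.lTensor M))) := by
  let one : F ≃ₗ[R] ⋀[R]^(0 + 1) F := (exteriorPower.oneEquiv R F).symm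
  have comm : koszulD φ 0 ∘ₗ one = (exteriorPower.zeroEquiv R F).symm ∘ₗ φ :=
    LinearMap.ext (koszulD_zero_oneEquiv_symm φ)
  have ker_eq : (LinearMap.ker ((koszulD φ 0).lTensor M)).comap (one.lTensor M).toLinearMap =
      LinearMap.ker (φ.lTensor M) := by
    rw [← LinearMap.ker_comp, LinearEquiv.coe_lTensor, ← LinearMap.lTensor_comp, comm,
      LinearMap.lTensor_comp, ← LinearEquiv.coe_lTensor, LinearEquiv.ker_comp]
  rw [← ker_eq]
  exact hP.prop_of_linearEquiv (LinearEquiv.ofSubmodule' _ _).symm (hP.prop_ker_koszulD hφ hM 0)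

lemma prop_range_lTensor (hφ : I ≤ LinearMap.range φ) (hM : P (ModuleCat.of R M)) :
    P (ModuleCat.of R (LinearMap.range (φ.lTensor M))) :=
  hP.prop_range_of_prop_ker _ (hP.prop_tensor hM) (hP.prop_ker_lTensor hφ hM)

end IsKoszulClosed

end KoszulClosed

section IdealTransform

variable {R : Type u} [CommRing R]

open scoped TensorProduct in
lemma IsKoszulClosed.prop_ker {I : Ideal R} {P : ObjectProperty (ModuleCat.{u} R)}
    (hP : IsKoszulClosed I P) (hR : P (ModuleCat.of R R)) {F : Type u} [AddCommGroup F]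
    [Module R F] [Module.Free R F] [Module.Finite R F] {φ : Module.Dual R F}
    (hφ : I ≤ LinearMap.range φ) : P (ModuleCat.of R (LinearMap.ker φ)) := by
  have ker_eq : LinearMap.ker (φ.lTensor R) =
      (LinearMap.ker φ).comap (TensorProduct.lid R F).toLinearMap := by
    have comm : (TensorProduct.lid R R).toLinearMap ∘ₗ φ.lTensor R =
        φ ∘ₗ (TensorProduct.lid R F).toLinearMap := by
      ext
      simp
    rw [← LinearMap.ker_comp, ← comm, LinearEquiv.ker_comp]
  exact hP.prop_of_linearEquiv (LinearEquiv.ofSubmodule' _ _) (ker_eq ▸ hP.prop_ker_lTensor hφ hR)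

lemma comp_mem_smul_top {I : Ideal R} {ι X : Type*} [Finite ι] [AddCommGroup X]
    [Module R X] {φ : Module.Dual R (ι → R)} (hφ : LinearMap.range φ ≤ I) (s : X →ₗ[R] ι → R) :
    φ ∘ₗ s ∈ I • (⊤ : Submodule R (X →ₗ[R] R)) := by
  classical
  have := Fintype.ofFinite ι
  have sum_eq : φ = ∑ i, φ (Pi.single i 1) • LinearMap.proj i := by
    ext i
    simp [Pi.single_apply]
  change LinearMap.lcomp R R s φ ∈ _
  rw [sum_eq]
  simp only [map_sum, map_smul]
  exact Submodule.sum_mem _ fun i _ ↦ Submodule.smul_mem_smul (hφ ⟨_, rfl⟩) trivial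

variable [IsNoetherianRing R] (I : Ideal R)

lemma isKoszulClosed_extProZero :
    IsKoszulClosed I (extProZero (idealModules (localCohomology.idealPowersDiagram I)) 1) where
  toIsClosedUnderIsomorphisms := inferInstance
  toIsClosedUnderExtensions := inferInstance
  exists_zero := ⟨ModuleCat.of R PUnit, ModuleCat.isZero_of_subsingleton _,
    extProZero_idealModules_of_le_annihilator
      (by rw [Module.annihilator_eq_top_iff.2 inferInstance]; exact le_top) 1⟩
  prop_X₃ hS h₁ h₂ := extProZero_X₃ hS (fun i hi ↦ h₁ (Nat.le_of_succ_le hi)) h₂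
  prop_of_le_annihilator _ _ hW := extProZero_idealModules_of_le_annihilator hW 1

lemma exists_pow_subtype_mem_smul_top
    (hcd : ∀ i : ℕ, 1 < i → Subsingleton ((localCohomology I i).obj (ModuleCat.of R R))) :
    ∃ n, (I ^ n).subtype ∈ I • (⊤ : Submodule R (↥(I ^ n) →ₗ[R] R)) := by
  obtain ⟨k, φ, hφ⟩ := (Submodule.fg_iff_exists_fin_linearMap R R).1 (IsNoetherian.noetherian I)
  have hR : extProZero (idealModules (localCohomology.idealPowersDiagram I)) 1
      (ModuleCat.of R R) :=
    extProZero_idealModules_of_ringModIdeals _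
      (extProZero_ringModIdeals_of_localCohomology I hcd)
  have hker := (isKoszulClosed_extProZero I).prop_ker hR hφ.ge
  rw [← φ.ker_rangeRestrict] at hker
  obtain ⟨⟨n⟩, g, s, hs⟩ := exists_lift_of_extProZero_one
    (LinearMap.shortExact_shortComplexKer φ.surjective_rangeRestrict) hker (k := .op 1)
    (ModuleCat.ofHom (Submodule.inclusion ((pow_one I).trans hφ.symm).le))
  have lift (a : ↥(I ^ n)) : φ (s.hom a) = a :=
    congrArg Subtype.val (LinearMap.congr_fun (ModuleCat.hom_ext_iff.1 hs) a)
  refine ⟨n, ?_⟩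
  rw [← show φ ∘ₗ s.hom = (I ^ n).subtype from LinearMap.ext lift]
  exact comp_mem_smul_top hφ.le s.hom

end IdealTransform

section ExtFinite

variable {R : Type u} [CommRing R]

lemma finite_of_exact [IsNoetherianRing R] {A B C : Type*} [AddCommGroup A] [Module R A]
    [AddCommGroup B] [Module R B] [AddCommGroup C] [Module R C] {f : A →ₗ[R] B} {g : B →ₗ[R] C}
    (h : Function.Exact f g) [Module.Finite R A] [Module.Finite R C] : Module.Finite R B :=
  Module.Finite.of_exact (f := f) (g := g.rangeRestrict)
    (by rwa [LinearMap.exact_iff, LinearMap.ker_rangeRestrict, ← LinearMap.exact_iff])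
    g.surjective_rangeRestrict

/-- The modules `Y` such that `Ext X Y n` is finitely generated for all `n`. -/
def extFinite (X : ModuleCat.{u} R) : ObjectProperty (ModuleCat.{u} R) := fun Y ↦
  ∀ n, Module.Finite R (Ext X Y n)

variable {X : ModuleCat.{u} R}

lemma extFinite_iff {Y : ModuleCat.{u} R} : extFinite X Y ↔
    ∀ n, Module.Finite R (((_root_.Ext R (ModuleCat R) n).obj (.op X)).obj Y) :=
  forall_congr' fun n ↦ (Module.Finite.equiv_iff (extEquiv R X Y n)).symm

instance : (extFinite X).IsClosedUnderIsomorphisms where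
  of_iso {Y Z} φ hY n := by
    have := hY n
    refine Module.Finite.of_surjective ((Ext.mk₀ φ.hom).postcompOfLinear R X (add_zero n)) fun e ↦
      ⟨e.comp (Ext.mk₀ φ.inv) (add_zero n), ?_⟩
    change (e.comp (Ext.mk₀ φ.inv) (add_zero n)).comp (Ext.mk₀ φ.hom) (add_zero n) = e
    rw [Ext.comp_assoc_of_third_deg_zero, Ext.mk₀_comp_mk₀, φ.inv_hom_id, Ext.comp_mk₀_id]

section ShortExact

variable [IsNoetherianRing R] {S : ShortComplex (ModuleCat.{u} R)}

instance : (extFinite X).IsClosedUnderExtensions where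
  prop_X₂_of_shortExact {S} hS h₁ h₃ n := by
    have := h₁ n
    have := h₃ n
    refine finite_of_exact (f := (Ext.mk₀ S.f).postcompOfLinear R X (add_zero n))
      (g := (Ext.mk₀ S.g).postcompOfLinear R X (add_zero n)) fun e ↦
      ⟨fun he ↦ Ext.covariant_sequence_exact₂ X hS e he, ?_⟩
    rintro ⟨e, rfl⟩
    change (e.comp (Ext.mk₀ S.f) (add_zero n)).comp (Ext.mk₀ S.g) (add_zero n) = 0
    rw [Ext.comp_assoc_of_third_deg_zero, Ext.mk₀_comp_mk₀, S.zero, Ext.mk₀_zero, Ext.comp_zero]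

lemma extFinite_X₃ (hS : S.ShortExact) (h₁ : extFinite X S.X₁) (h₂ : extFinite X S.X₂) :
    extFinite X S.X₃ := fun n ↦ by
  have := h₁ (n + 1)
  have := h₂ n
  refine finite_of_exact (f := (Ext.mk₀ S.g).postcompOfLinear R X (add_zero n))
    (g := hS.extClass.postcompOfLinear R X rfl) fun e ↦
    ⟨fun he ↦ Ext.covariant_sequence_exact₃ X hS e rfl he, ?_⟩
  rintro ⟨e, rfl⟩
  change (e.comp (Ext.mk₀ S.g) (add_zero n)).comp hS.extClass rfl = 0
  rw [Ext.comp_assoc_of_second_deg_zero, hS.comp_extClass, Ext.comp_zero]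

lemma extFinite_of_finite [Module.Finite R X] {Y : ModuleCat.{u} R} [Module.Finite R Y] :
    extFinite X Y :=
  fun n ↦ ModuleCat.finite_ext R X Y n

instance [Module.Finite R X] : (extFinite X).ContainsZero where
  exists_zero := ⟨ModuleCat.of R PUnit, ModuleCat.isZero_of_subsingleton _, extFinite_of_finite⟩

end ShortExact

section Annihilator

variable [IsNoetherianRing R] {I : Ideal R} {M : Type u} [AddCommGroup M] [Module R M]

lemma finite_of_le_annihilator (hM : extFinite (ModuleCat.of R (R ⧸ I)) (ModuleCat.of R M))
    {W : Submodule R M} (hW : I ≤ W.annihilator) : Module.Finite R W := by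
  have := hM 0
  have : Module.Finite R ((R ⧸ I) →ₗ[R] M) :=
    Module.Finite.equiv ((Ext.linearEquiv₀ (R := R)).trans (ModuleCat.homLinearEquiv (S := R)
      (M := ModuleCat.of R (R ⧸ I)) (N := ModuleCat.of R M)))
  have : Module.Finite R ((R ⧸ I) →ₗ[R] W) :=
    Module.Finite.of_injective (W.subtype.compRight R) fun f g hfg ↦
      LinearMap.ext fun x ↦ Subtype.ext (LinearMap.congr_fun hfg x)
  refine Module.Finite.of_surjective
    (LinearMap.applyₗ (1 : R ⧸ I) : ((R ⧸ I) →ₗ[R] W) →ₗ[R] W) fun w ↦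
    ⟨Submodule.liftQ I (LinearMap.toSpanSingleton R W w) fun r hr ↦ ?_, one_smul R w⟩
  exact Module.mem_annihilator.1 (hW hr) w

variable (I) in
lemma isKoszulClosed_extFinite : IsKoszulClosed I (extFinite (ModuleCat.of R (R ⧸ I))) where
  toIsClosedUnderIsomorphisms := inferInstance
  toIsClosedUnderExtensions := inferInstance
  toContainsZero := inferInstance
  prop_X₃ := extFinite_X₃
  prop_of_le_annihilator hX _ hW :=
    have := finite_of_le_annihilator hX hW
    extFinite_of_finite

end Annihilator

end ExtFinite

section SMulMap

open scoped TensorProduct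

section

variable {R : Type*} [CommRing R] (I J : Ideal R) {M N : Type*} [AddCommGroup M] [Module R M]
  [AddCommGroup N] [Module R N]

variable (N) in
/-- The multiplication `N ⊗ I → N`. Its kernel is `Tor₁(N, R ⧸ I)` and its cokernel `N ⧸ IN`. -/
def smulMap : N ⊗[R] I →ₗ[R] N :=
  (TensorProduct.rid R N).toLinearMap ∘ₗ I.subtype.lTensor N

@[simp]
lemma smulMap_tmul (n : N) (a : I) : smulMap I N (n ⊗ₜ a) = (a : R) • n :=
  rfl

lemma range_smulMap : LinearMap.range (smulMap I N) = I • (⊤ : Submodule R N) := by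
  refine le_antisymm ?_ (Submodule.smul_le.2 fun r hr n _ ↦ ⟨n ⊗ₜ ⟨r, hr⟩, rfl⟩)
  rintro _ ⟨t, rfl⟩
  induction t with
  | zero => exact zero_mem _
  | add s t hs ht => exact map_add (smulMap I N) s t ▸ add_mem hs ht
  | tmul n a => exact Submodule.smul_mem_smul a.2 trivial

lemma coe_smul_eq_smulMap_tmul (a : I) (t : N ⊗[R] I) : (a : R) • t = smulMap I N t ⊗ₜ a := by
  induction t with
  | zero => rw [smul_zero, map_zero, TensorProduct.zero_tmul]
  | add s t hs ht => rw [smul_add, map_add, TensorProduct.add_tmul, hs, ht]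
  | tmul n b =>
    have swap : (a : R) • b = (b : R) • a := Subtype.ext (mul_comm (a : R) b)
    rw [smulMap_tmul, ← TensorProduct.tmul_smul, swap, TensorProduct.smul_tmul]

lemma le_annihilator_ker_smulMap : I ≤ (LinearMap.ker (smulMap I N)).annihilator := fun r hr ↦
  Submodule.mem_annihilator.2 fun t ht ↦ by
    rw [← Subtype.coe_mk r hr, coe_smul_eq_smulMap_tmul, LinearMap.mem_ker.1 ht,
      TensorProduct.zero_tmul]

lemma smulMap_comp_rTensor (f : M →ₗ[R] N) :
    smulMap I N ∘ₗ f.rTensor I = f ∘ₗ smulMap I M :=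
  TensorProduct.ext' fun m a ↦ (map_smul f (a : R) m).symm

variable (M) in
lemma smulMap_comp_lTensor_rangeRestrict (φ : N →ₗ[R] R) :
    smulMap (LinearMap.range φ) M ∘ₗ φ.rangeRestrict.lTensor M =
      (TensorProduct.rid R M).toLinearMap ∘ₗ φ.lTensor M :=
  TensorProduct.ext' fun _ _ ↦ rfl

lemma finite_of_surjective_of_le_annihilator [Module.Finite R (M ⧸ I • (⊤ : Submodule R M))]
    {f : M →ₗ[R] N} (hf : Function.Surjective f) (hN : I ≤ Module.annihilator R N) :
    Module.Finite R N := by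
  refine Module.Finite.of_surjective ((I • (⊤ : Submodule R M)).liftQ f ?_)
    (LinearMap.range_eq_top.1 ((Submodule.range_liftQ _ _ _).trans (LinearMap.range_eq_top.2 hf)))
  exact Submodule.smul_le.2 fun r hr m _ ↦ by
    rw [LinearMap.mem_ker, map_smul, Module.mem_annihilator.1 (hN hr)]

lemma le_annihilator_quotient_smul_top :
    I ≤ Module.annihilator R (M ⧸ I • (⊤ : Submodule R M)) := fun r hr ↦
  Module.mem_annihilator.2 fun x ↦ by
    obtain ⟨m, rfl⟩ := Submodule.mkQ_surjective _ x
    rw [← map_smul]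
    exact (Submodule.Quotient.mk_eq_zero _).2 (Submodule.smul_mem_smul hr trivial)

lemma finite_quotient_smul_top_of_surjective [Module.Finite R (M ⧸ I • (⊤ : Submodule R M))]
    {f : M →ₗ[R] N} (hf : Function.Surjective f) :
    Module.Finite R (N ⧸ I • (⊤ : Submodule R N)) :=
  finite_of_surjective_of_le_annihilator I (f := (I • (⊤ : Submodule R N)).mkQ ∘ₗ f)
    ((Submodule.mkQ_surjective _).comp hf) (le_annihilator_quotient_smul_top I)

variable {I} in
lemma surjective_smulMap_pow (hI : Function.Surjective (smulMap I N)) (n : ℕ) :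
    Function.Surjective (smulMap (I ^ n) N) := by
  rw [← LinearMap.range_eq_top, range_smulMap] at hI ⊢
  induction n with
  | zero => rw [pow_zero, one_smul]
  | succ n ih => rw [pow_succ, mul_smul, hI, ih]

variable [IsNoetherianRing R]

lemma finite_ker_smulMap_quotient (L : Submodule R N)
    [Module.Finite R (LinearMap.ker (smulMap I N))]
    [Module.Finite R (L ⧸ I • (⊤ : Submodule R L))] :
    Module.Finite R (LinearMap.ker (smulMap I (N ⧸ L))) := by
  have map_ker : ∀ t ∈ LinearMap.ker (smulMap I N),
      L.mkQ.rTensor I t ∈ LinearMap.ker (smulMap I (N ⧸ L)) := fun t ht ↦ by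
    rw [LinearMap.mem_ker, ← LinearMap.comp_apply, smulMap_comp_rTensor, LinearMap.comp_apply,
      LinearMap.mem_ker.1 ht, map_zero]
  have exact_mkQ : Function.Exact (smulMap I L) (I • (⊤ : Submodule R L)).mkQ := by
    rw [LinearMap.exact_iff, Submodule.ker_mkQ, range_smulMap]
  have exact_snake := SnakeLemma.exact_δ'_right (K₃ := LinearMap.ker (smulMap I (N ⧸ L)))
    (smulMap I L) (smulMap I N) (smulMap I (N ⧸ L)) (L.subtype.rTensor I) (L.mkQ.rTensor I)
    (rTensor_exact I (LinearMap.exact_subtype_mkQ L) L.mkQ_surjective) L.subtype L.mkQ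
    (LinearMap.exact_subtype_mkQ L) (smulMap_comp_rTensor I L.subtype).symm
    (smulMap_comp_rTensor I L.mkQ).symm (LinearMap.ker (smulMap I N)).subtype
    (LinearMap.exact_subtype_ker_map _) (LinearMap.ker (smulMap I (N ⧸ L))).subtype
    (LinearMap.exact_subtype_ker_map _) (I • (⊤ : Submodule R L)).mkQ exact_mkQ
    (LinearMap.rTensor_surjective I L.mkQ_surjective) L.injective_subtype
    ((L.mkQ.rTensor I).restrict map_ker) rfl
    (LinearMap.ker (smulMap I (N ⧸ L))).injective_subtype
  exact finite_of_exact (A := LinearMap.ker (smulMap I N))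
    (B := LinearMap.ker (smulMap I (N ⧸ L))) (C := L ⧸ I • (⊤ : Submodule R L))
    exact_snake

variable {I J}

lemma finite_ker_smulMap_mul (hI : Function.Surjective (smulMap I N))
    [Module.Finite R (LinearMap.ker (smulMap I N))]
    [Module.Finite R (LinearMap.ker (smulMap J N))] :
    Module.Finite R (LinearMap.ker (smulMap (I * J) N)) := by
  let mulMap : (N ⊗[R] I) ⊗[R] J →ₗ[R] N ⊗[R] ↥(I * J) :=
    (Submodule.mulMap' I J).lTensor N ∘ₗ (TensorProduct.assoc R N I J).toLinearMap
  have mulMap_surjective : Function.Surjective mulMap :=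
    (LinearMap.lTensor_surjective N (Submodule.mulMap'_surjective I J)).comp
      (TensorProduct.assoc R N I J).surjective
  have comm : smulMap (I * J) N ∘ₗ mulMap = smulMap J N ∘ₗ (smulMap I N).rTensor J :=
    TensorProduct.ext_threefold fun n a b ↦
      (mul_smul (a : R) (b : R) n).trans (smul_comm (a : R) (b : R) n)
  have exact_rTensor := rTensor_exact J (LinearMap.exact_subtype_ker_map (smulMap I N)) hI
  have fg_rTensor : (LinearMap.ker ((smulMap I N).rTensor J)).FG := by
    rw [exact_rTensor.linearMap_ker_eq, ← Module.Finite.iff_fg]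
    infer_instance
  rw [Module.Finite.iff_fg, ← Submodule.map_comap_eq_of_surjective mulMap_surjective
    (LinearMap.ker (smulMap (I * J) N)), ← LinearMap.ker_comp, comm]
  exact (Submodule.fg_ker_comp _ _ fg_rTensor (Module.Finite.iff_fg.1 inferInstance)
    (LinearMap.rTensor_surjective J hI)).map _

lemma finite_ker_smulMap_pow (hI : Function.Surjective (smulMap I N))
    [Module.Finite R (LinearMap.ker (smulMap I N))] (n : ℕ) :
    Module.Finite R (LinearMap.ker (smulMap (I ^ n) N)) := by
  induction n with
  | zero =>
    have ker_eq_bot : LinearMap.ker (smulMap (I ^ 0) N) = ⊥ := by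
      rw [← Submodule.annihilator_eq_top_iff, eq_top_iff, ← Ideal.one_eq_top, ← pow_zero I]
      exact le_annihilator_ker_smulMap _
    rw [ker_eq_bot]
    infer_instance
  | succ n ih =>
    rw [pow_succ']
    exact finite_ker_smulMap_mul hI

end

section ExtFinite

variable {R : Type u} [CommRing R] [IsNoetherianRing R] {I : Ideal R} {M : Type u}
  [AddCommGroup M] [Module R M]

lemma extFinite_smul_top (hM : extFinite (ModuleCat.of R (R ⧸ I)) (ModuleCat.of R M)) :
    extFinite (ModuleCat.of R (R ⧸ I)) (ModuleCat.of R ↥(I • (⊤ : Submodule R M))) := by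
  obtain ⟨k, φ, rfl⟩ := (Submodule.fg_iff_exists_fin_linearMap R R).1 (IsNoetherian.noetherian I)
  have map_rid : (LinearMap.range (φ.lTensor M)).map (TensorProduct.rid R M).toLinearMap =
      LinearMap.range φ • (⊤ : Submodule R M) := by
    rw [← range_smulMap, ← LinearMap.range_comp, ← smulMap_comp_lTensor_rangeRestrict,
      LinearMap.range_comp_of_range_eq_top _ (LinearMap.range_eq_top.2
        (LinearMap.lTensor_surjective M φ.surjective_rangeRestrict))]
  rw [← map_rid]
  exact (isKoszulClosed_extFinite _).prop_of_linearEquiv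
    ((TensorProduct.rid R M).submoduleMap _)
    ((isKoszulClosed_extFinite _).prop_range_lTensor le_rfl hM)

lemma finite_quotient_smul_top (hM : extFinite (ModuleCat.of R (R ⧸ I)) (ModuleCat.of R M)) :
    Module.Finite R (M ⧸ I • (⊤ : Submodule R M)) := by
  have ext_quot : extFinite _ (ModuleCat.of R (M ⧸ I • (⊤ : Submodule R M))) :=
    extFinite_X₃ (shortExact_quotientShortComplex _) (extFinite_smul_top hM) hM
  have := finite_of_le_annihilator ext_quot (W := ⊤) <| by
    rw [Submodule.annihilator_top]
    exact le_annihilator_quotient_smul_top I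
  exact Module.Finite.equiv Submodule.topEquiv

lemma finite_ker_smulMap (hM : extFinite (ModuleCat.of R (R ⧸ I)) (ModuleCat.of R M)) :
    Module.Finite R (LinearMap.ker (smulMap I M)) := by
  obtain ⟨k, φ, rfl⟩ := (Submodule.fg_iff_exists_fin_linearMap R R).1 (IsNoetherian.noetherian I)
  have ext_ker := (isKoszulClosed_extFinite _).prop_ker_lTensor le_rfl hM
  have ker_eq : LinearMap.ker (φ.lTensor M) =
      (LinearMap.ker (smulMap (LinearMap.range φ) M)).comap (φ.rangeRestrict.lTensor M) := by
    rw [← LinearMap.ker_comp, smulMap_comp_lTensor_rangeRestrict, LinearEquiv.ker_comp]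
  rw [ker_eq] at ext_ker
  have := finite_quotient_smul_top ext_ker
  exact finite_of_surjective_of_le_annihilator (LinearMap.range φ)
    (LinearMap.submoduleComap_surjective_of_surjective _ _
      (LinearMap.lTensor_surjective M φ.surjective_rangeRestrict)) (le_annihilator_ker_smulMap _)

end ExtFinite

end SMulMap

section Cokernel

open scoped TensorProduct

variable {R : Type u} [CommRing R] {I : Ideal R}

lemma ext_comp_eq_zero_of_mem_smul_top {X : ModuleCat.{u} R} (hX : I ≤ Module.annihilator R X)
    {B C : Type u} [AddCommGroup B] [Module R B] [AddCommGroup C] [Module R C] {g : B →ₗ[R] C}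
    (hg : g ∈ I • (⊤ : Submodule R (B →ₗ[R] C))) {n : ℕ} (e : Ext X (ModuleCat.of R B) n) :
    e.comp (Ext.mk₀ (ModuleCat.ofHom g)) (add_zero n) = 0 := by
  induction hg using Submodule.smul_induction_on' with
  | smul r hr g _ =>
    have smul_id : r • 𝟙 X = 0 := by
      ext x
      exact Module.mem_annihilator.1 (hX hr) x
    rw [show ModuleCat.ofHom (r • g) = r • ModuleCat.ofHom g from rfl, Ext.mk₀_smul, Ext.comp_smul,
      ← Ext.mk₀_id_comp (Ext.comp _ _ _), ← Ext.smul_comp, ← Ext.mk₀_smul, smul_id, Ext.mk₀_zero,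
      Ext.zero_comp]
  | add g₁ _ g₂ _ h₁ h₂ =>
    rw [ModuleCat.ofHom_add, Ext.mk₀_add, Ext.comp_add, h₁, h₂, add_zero]

lemma smulMap_mem_smul_top {J : Ideal R} (hJ : J.subtype ∈ I • (⊤ : Submodule R (J →ₗ[R] R)))
    (C : Type*) [AddCommGroup C] [Module R C] :
    smulMap J C ∈ I • (⊤ : Submodule R (C ⊗[R] J →ₗ[R] C)) :=
  Submodule.smul_top_le_comap_smul_top I
    ((TensorProduct.rid R C).toLinearMap.compRight R ∘ₗ LinearMap.lTensorHom C) hJ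

lemma exists_fg_sup_eq_top {N : Type*} [AddCommGroup N] [Module R N] (L : Submodule R N)
    [Module.Finite R (N ⧸ L)] : ∃ N' : Submodule R N, N'.FG ∧ L ⊔ N' = ⊤ := by
  obtain ⟨n, f, hf⟩ := Module.Finite.exists_fin' R (N ⧸ L)
  obtain ⟨g, hg⟩ := Module.projective_lifting_property L.mkQ f L.mkQ_surjective
  refine ⟨LinearMap.range g, Module.Finite.iff_fg.1 inferInstance, ?_⟩
  rw [← Submodule.map_mkQ_eq_top, ← LinearMap.range_comp, hg, LinearMap.range_eq_top.2 hf]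

variable [IsNoetherianRing R]

-- Postcomposition with `g` kills `Ext (R ⧸ I) B n`, so `Ext (R ⧸ I) C n` embeds in
-- `Ext (R ⧸ I) (ker g) (n + 1)`.
lemma extFinite_of_mem_smul_top {B C : Type u} [AddCommGroup B] [Module R B] [AddCommGroup C]
    [Module R C] {g : B →ₗ[R] C} (hg : g ∈ I • (⊤ : Submodule R (B →ₗ[R] C)))
    (hg' : Function.Surjective g) [Module.Finite R (LinearMap.ker g)] :
    extFinite (ModuleCat.of R (R ⧸ I)) (ModuleCat.of R C) := fun n ↦ by
  have shortExact := LinearMap.shortExact_shortComplexKer hg'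
  have : Module.Finite R
      (Ext (ModuleCat.of R (R ⧸ I)) (ModuleCat.of R (LinearMap.ker g)) (n + 1)) :=
    extFinite_of_finite (n + 1)
  refine Module.Finite.of_injective (shortExact.extClass.postcompOfLinear R _ rfl)
    ((injective_iff_map_eq_zero _).2 fun e he ↦ ?_)
  obtain ⟨e, rfl⟩ := Ext.covariant_sequence_exact₃ _ shortExact e rfl he
  have le_annihilator : I ≤ Module.annihilator R (ModuleCat.of R (R ⧸ I)) :=
    Ideal.annihilator_quotient.ge
  exact ext_comp_eq_zero_of_mem_smul_top le_annihilator hg e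

variable (hcd : ∀ i : ℕ, 1 < i → Subsingleton ((localCohomology I i).obj (ModuleCat.of R R)))

include hcd in
lemma extFinite_of_surjective_smulMap {C : Type u} [AddCommGroup C] [Module R C]
    (hC : Function.Surjective (smulMap I C)) [Module.Finite R (LinearMap.ker (smulMap I C))] :
    extFinite (ModuleCat.of R (R ⧸ I)) (ModuleCat.of R C) := by
  obtain ⟨n, hn⟩ := exists_pow_subtype_mem_smul_top I hcd
  have := finite_ker_smulMap_pow hC n
  exact extFinite_of_mem_smul_top (smulMap_mem_smul_top hn C) (surjective_smulMap_pow hC n)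

variable {M N : Type u} [AddCommGroup M] [Module R M] [AddCommGroup N] [Module R N]
  (f : M →ₗ[R] N) (hM : extFinite (ModuleCat.of R (R ⧸ I)) (ModuleCat.of R M))
  (hN : extFinite (ModuleCat.of R (R ⧸ I)) (ModuleCat.of R N))

include hM hN

lemma finite_ker_smulMap_coker :
    Module.Finite R (LinearMap.ker (smulMap I (N ⧸ LinearMap.range f))) := by
  have := finite_ker_smulMap hN
  have := finite_quotient_smul_top hM
  have := finite_quotient_smul_top_of_surjective I f.surjective_rangeRestrict
  exact finite_ker_smulMap_quotient I (LinearMap.range f)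

include hcd

lemma extFinite_coker_of_sup_eq_top (hf : I • ⊤ ⊔ LinearMap.range f = ⊤) :
    extFinite (ModuleCat.of R (R ⧸ I)) (ModuleCat.of R (N ⧸ LinearMap.range f)) := by
  have := finite_ker_smulMap_coker f hM hN
  refine extFinite_of_surjective_smulMap hcd (LinearMap.range_eq_top.1 ?_)
  have top_eq : ⊤ = (⊤ : Submodule R N).map (LinearMap.range f).mkQ := by
    rw [Submodule.map_top, Submodule.range_mkQ]
  rw [range_smulMap, top_eq, ← Submodule.map_smul'', ← top_eq, Submodule.map_mkQ_eq_top, sup_comm,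
    hf]

lemma extFinite_coker :
    extFinite (ModuleCat.of R (R ⧸ I)) (ModuleCat.of R (N ⧸ LinearMap.range f)) := by
  have := finite_quotient_smul_top hN
  obtain ⟨N', hN', sup_eq_top⟩ := exists_fg_sup_eq_top (I • (⊤ : Submodule R N))
  have : Module.Finite R N' := Module.Finite.iff_fg.2 hN'
  have hMN' : extFinite (ModuleCat.of R (R ⧸ I)) (ModuleCat.of R (M × N')) :=
    ObjectProperty.prop_of_iso _ (ModuleCat.biprodIsoProd (ModuleCat.of R M) (ModuleCat.of R N'))
      (ObjectProperty.prop_biprod _ hM extFinite_of_finite)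
  have hcoprod := extFinite_coker_of_sup_eq_top hcd (f.coprod N'.subtype) hMN' hN <| by
    rw [LinearMap.range_coprod, Submodule.range_subtype, sup_left_comm, sup_eq_top, sup_top_eq]
  rw [LinearMap.range_coprod, Submodule.range_subtype] at hcoprod
  have : Module.Finite R (N'.map (LinearMap.range f).mkQ) := Module.Finite.iff_fg.2 (hN'.map _)
  exact ObjectProperty.prop_X₂_of_shortExact _
    (shortExact_quotientShortComplex (N'.map (LinearMap.range f).mkQ)) extFinite_of_finite <|
    ObjectProperty.prop_of_iso _
      (Submodule.quotientQuotientEquivQuotientSup _ N').symm.toModuleIso hcoprod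

end Cokernel

end CofiniteModule

theorem isCofinite_coker_general {R : Type} [CommRing R] [IsNoetherianRing R] (I : Ideal R)
    (hcd : ∀ i : ℕ, 1 < i → Subsingleton ((localCohomology I i).obj (ModuleCat.of R R)))
    {M N : Type} [AddCommGroup M] [Module R M] [AddCommGroup N] [Module R N] (f : M →ₗ[R] N)
    (hM : ∀ i : ℕ, Module.Finite R
      (((Ext R (ModuleCat R) i).obj (.op (ModuleCat.of R (R ⧸ I)))).obj (ModuleCat.of R M)))
    (hN : IsCofinite I N) : IsCofinite I (N ⧸ LinearMap.range f) :=
  have support_subset := Module.support_subset_of_surjective _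
    (LinearMap.range f).mkQ_surjective
  have ext_finite := CofiniteModule.extFinite_coker hcd f
    (CofiniteModule.extFinite_iff.2 hM) (CofiniteModule.extFinite_iff.2 hN.2)
  ⟨support_subset.trans hN.1, CofiniteModule.extFinite_iff.1 ext_finite⟩

/-- If `R` is a commutative noetherian ring, `I` an ideal with `cd(I,R) ≤ 1`
(i.e. the local cohomology modules `H^i_I(R)` vanish for `i ≥ 2`), and
`f : M → N` is a homomorphism of `I`-cofinite `R`-modules, then `coker f` is
`I`-cofinite. -/
theorem isCofinite_coker {R : Type} [CommRing R] [IsNoetherianRing R] (I : Ideal R)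
    (hcd : ∀ i : ℕ, 1 < i → Subsingleton ((localCohomology I i).obj (ModuleCat.of R R)))
    {M N : Type} [AddCommGroup M] [Module R M] [AddCommGroup N] [Module R N]
    (f : M →ₗ[R] N) (hM : IsCofinite I M) (hN : IsCofinite I N) :
    IsCofinite I (N ⧸ LinearMap.range f) :=
  isCofinite_coker_general I hcd f hM.2 hN
end

section
/- Let R be a commutative noetherian ring and 𝔞 an ideal with cd(𝔞,R) ≤ 1. If f : M → N is an R-homomorphism between 𝔞-cofinite R-modules, then ker f is 𝔞-cofinite. -/
open CategoryTheory

/-!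
Since `H^i_I(R) = 0` for `i ≥ 2`, the direct limit of `Ext^i(I^n, R)` over `n` vanishes for all
`i ≥ 1`. If `I` has `k` generators, then Mayer–Vietoris and Artin–Rees show that the direct limit
of `Ext^i(I^n, X)` vanishes for every module `X` as soon as `i ≥ k`. Descending induction on `i`
extends the vanishing for `i ≥ 1` from `R` to every finitely generated `X`. Applied to the class
of `0 → K → R^k → I → 0` in `Ext^1(I, K)`, this says that some inclusion `I^m → I` factors through
a free module, and therefore induces zero on `Ext^i(-, X)` for all `X` and all `i ≥ 1`. So
`Ext^i(I, X)` is a quotient of `Ext^i(I/I^m, X)`, and by dévissage `Ext^i(R/I, X)` is finitely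
generated for all `i` once it is so for `i = 0` and `i = 1`. For a kernel, these two degrees
follow from the long exact sequences.
-/

universe w v u

section Comparison

variable {R : Type*} [Ring R]

section Homology

variable (K : CochainComplex (ModuleCat R) ℕ) (n : ℕ)

lemma homologyπ_apply_eq_zero_iff (z : K.cycles n) :
    K.homologyπ n z = 0 ↔
      ∃ y, K.d ((ComplexShape.up ℕ).prev n) n y = K.iCycles n z := by
  have hexact := (ShortComplex.moduleCat_exact_iff _).1 <|
    ShortComplex.exact_of_g_is_cokernel (.mk _ _ (K.toCycles_comp_homologyπ _ _))
      (K.homologyIsCokernel _ n rfl)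
  have htoCycles (y) : K.iCycles n (K.toCycles _ n y) = K.d _ n y :=
    ConcreteCategory.congr_hom (K.toCycles_i ((ComplexShape.up ℕ).prev n) n) y
  constructor
  · intro hz
    obtain ⟨y, rfl⟩ := hexact z hz
    exact ⟨y, (htoCycles y).symm⟩
  · rintro ⟨y, hy⟩
    obtain rfl : K.toCycles _ n y = z :=
      (ModuleCat.mono_iff_injective (K.iCycles n)).1 inferInstance ((htoCycles y).trans hy)
    exact ConcreteCategory.congr_hom (K.toCycles_comp_homologyπ _ n) y

end Homology

variable {C : Type u} [Category.{v} C] [Abelian C] [Linear R C]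

section ExtMk

variable [HasExt.{w} C] {X Y : C} (P : ProjectiveResolution X)

lemma extMk_zero_injective {f : P.complex.X 0 ⟶ Y} (hf : P.complex.d 1 0 ≫ f = 0)
    (h : P.extMk f 1 rfl hf = 0) : f = 0 := by
  rw [← P.extEquivCohomologyClass.apply_eq_iff_eq, P.extEquivCohomologyClass_extMk,
    P.extEquivCohomologyClass_zero, CochainComplex.HomComplex.CohomologyClass.mk_eq_zero_iff,
    CochainComplex.HomComplex.Cocycle.toSingleMk_mem_coboundaries_iff _ _ _ _ _ 1 (by simp)] at h
  obtain ⟨g, hg⟩ := h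
  have hX : Limits.IsZero (P.cochainComplex.X 1) :=
    CochainComplex.isZero_of_isStrictlyLE _ 0 1 one_pos
  rwa [hX.eq_of_src g 0, Limits.comp_zero, eq_comm, Preadditive.IsIso.comp_left_eq_zero] at hg

lemma extMk_eq_zero_iff_exists_prev {n : ℕ} (f : P.complex.X n ⟶ Y)
    (hf : P.complex.d (n + 1) n ≫ f = 0) :
    P.extMk f (n + 1) rfl hf = 0 ↔
      ∃ g : P.complex.X ((ComplexShape.up ℕ).prev n) ⟶ Y, P.complex.d n _ ≫ g = f := by
  cases n with
  | zero =>
    rw [CochainComplex.prev_nat_zero]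
    constructor
    · intro h
      exact ⟨0, by rw [extMk_zero_injective P hf h, Limits.comp_zero]⟩
    · rintro ⟨g, rfl⟩
      simp
  | succ n =>
    rw [CochainComplex.prev_nat_succ]
    exact P.extMk_eq_zero_iff f (n + 2) rfl hf n rfl

lemma smul_extMk {n : ℕ} (r : R) (f : P.complex.X n ⟶ Y) (hf : P.complex.d (n + 1) n ≫ f = 0) :
    r • P.extMk f (n + 1) rfl hf =
      P.extMk (r • f) (n + 1) rfl (by rw [Linear.comp_smul, hf, smul_zero]) := by
  rw [Abelian.Ext.smul_eq_comp_mk₀, ProjectiveResolution.extMk_comp_mk₀]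
  simp only [Linear.comp_smul, Category.comp_id]

end ExtMk

section Cocycles

variable {X : C} (P : ProjectiveResolution X) (Y : C) (n : ℕ)

/-- The cochain complex `Hom(P, Y)` for a projective resolution `P`. -/
noncomputable abbrev homComplex : CochainComplex (ModuleCat R) ℕ := P.complex.linearYonedaObj R Y

/-- The morphism `P_n ⟶ Y` underlying an `n`-cocycle of `Hom(P, Y)`. -/
noncomputable def cocycleHom : (homComplex (R := R) P Y).cycles n →ₗ[R] (P.complex.X n ⟶ Y) :=
  ((homComplex P Y).iCycles n).hom

variable {P Y n} in
lemma d_comp_cocycleHom (z : (homComplex (R := R) P Y).cycles n) :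
    P.complex.d (n + 1) n ≫ cocycleHom P Y n z = 0 :=
  ConcreteCategory.congr_hom ((homComplex P Y).iCycles_d n (n + 1)) z

variable (R) in
lemma exists_cocycleHom_eq (f : P.complex.X n ⟶ Y) (hf : P.complex.d (n + 1) n ≫ f = 0) :
    ∃ z, cocycleHom (R := R) P Y n z = f :=
  (ShortComplex.moduleCat_exact_iff _).1
    (ShortComplex.exact_of_f_is_kernel (.mk _ _ ((homComplex (R := R) P Y).iCycles_d n (n + 1)))
      ((homComplex P Y).cyclesIsKernel n (n + 1) (CochainComplex.next ℕ n))) f hf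

/-- The map from the `n`-cocycles of `Hom(P, Y)`, for a projective resolution `P` of `X`, to
`Abelian.Ext X Y n`. -/
noncomputable def extOfCocycle [HasExt.{w} C] :
    (homComplex (R := R) P Y).cycles n →ₗ[R] Abelian.Ext X Y n where
  toFun z := P.extMk (cocycleHom P Y n z) (n + 1) rfl (d_comp_cocycleHom z)
  map_add' z z' := by
    simp only [ProjectiveResolution.add_extMk, map_add]
  map_smul' r z := by
    simp only [RingHom.id_apply, smul_extMk, map_smul]

/-- The map from the `n`-cocycles of `Hom(P, Y)`, for a projective resolution `P` of `X`, to the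
value at `X` of the `n`-th derived functor of `Hom(-, Y)`. -/
noncomputable def derivedExtOfCocycle [EnoughProjectives C] :
    (homComplex (R := R) P Y).cycles n →ₗ[R] ((Ext R C n).obj (Opposite.op X)).obj Y :=
  ((homComplex P Y).homologyπ n ≫ (P.isoExt n Y).inv).hom

lemma extOfCocycle_surjective [HasExt.{w} C] :
    Function.Surjective (extOfCocycle (R := R) P Y n) := by
  intro e
  obtain ⟨f, hf, rfl⟩ := P.extMk_surjective e (n + 1) rfl
  obtain ⟨z, rfl⟩ := exists_cocycleHom_eq R P Y n f hf
  exact ⟨z, rfl⟩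

variable [EnoughProjectives C]

lemma derivedExtOfCocycle_surjective :
    Function.Surjective (derivedExtOfCocycle (R := R) P Y n) :=
  (ModuleCat.epi_iff_surjective ((homComplex P Y).homologyπ n ≫ (P.isoExt n Y).inv)).1
    inferInstance

variable [HasExt.{w} C]

lemma ker_extOfCocycle :
    LinearMap.ker (extOfCocycle (R := R) P Y n) = LinearMap.ker (derivedExtOfCocycle P Y n) := by
  ext z
  have isoExt_inv_injective : Function.Injective (P.isoExt (R := R) n Y).inv :=
    (ModuleCat.mono_iff_injective _).1 inferInstance
  calc extOfCocycle P Y n z = 0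
    _ ↔ (homComplex P Y).homologyπ n z = 0 :=
      (extMk_eq_zero_iff_exists_prev P _ (d_comp_cocycleHom z)).trans
        (homologyπ_apply_eq_zero_iff (homComplex P Y) n z).symm
    _ ↔ derivedExtOfCocycle P Y n z = 0 :=
      (map_eq_zero_iff (P.isoExt n Y).inv.hom isoExt_inv_injective).symm

/-- The comparison of the two versions of `Ext`: morphisms in the derived category, and derived
functors of `Hom`. -/
noncomputable def extEquivDerivedExt :
    Abelian.Ext X Y n ≃ₗ[R] ((Ext R C n).obj (Opposite.op X)).obj Y :=
  ((extOfCocycle P Y n).quotKerEquivOfSurjective (extOfCocycle_surjective P Y n)).symm ≪≫ₗ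
    Submodule.quotEquivOfEq _ _ (ker_extOfCocycle P Y n) ≪≫ₗ
    (derivedExtOfCocycle P Y n).quotKerEquivOfSurjective (derivedExtOfCocycle_surjective P Y n)

lemma extEquivDerivedExt_extOfCocycle (z : (homComplex P Y).cycles n) :
    extEquivDerivedExt P Y n (extOfCocycle P Y n z) = derivedExtOfCocycle (R := R) P Y n z := by
  have hz : ((extOfCocycle P Y n).quotKerEquivOfSurjective (extOfCocycle_surjective P Y n)).symm
      (extOfCocycle P Y n z) = Submodule.Quotient.mk z :=
    (LinearEquiv.symm_apply_eq _).2 rfl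
  simp only [extEquivDerivedExt, LinearEquiv.trans_apply, hz]
  rfl

end Cocycles

section Naturality

section Unop

variable {V ι : Type*} [Category* V] [Preadditive V] {c : ComplexShape ι}
  {K L : HomologicalComplex Vᵒᵖ c} (φ : K ⟶ L)

/-- The map of unopposite complexes induced by a map of complexes in the opposite category. -/
def unopMap : L.unop ⟶ K.unop := (HomologicalComplex.unopFunctor V c).map φ.op

lemma homologyUnop_hom_naturality [CategoryWithHomology V] (i : ι) :
    (L.homologyUnop i).hom ≫ (HomologicalComplex.homologyMap φ i).unop =
      HomologicalComplex.homologyMap (unopMap φ) i ≫ (K.homologyUnop i).hom :=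
  congrArg Quiver.Hom.unop (HomologicalComplex.homologyOp_hom_naturality (unopMap φ) i)

end Unop

variable {X X' : C} {P : ProjectiveResolution X} {P' : ProjectiveResolution X'}
  {g : X' ⟶ X} (φ : ProjectiveResolution.Hom P' P g) (Y : C) (n : ℕ)

variable (R) in
/-- The map `Hom(P, Y) ⟶ Hom(P', Y)` induced by a map `φ : P' ⟶ P` of complexes. -/
noncomputable abbrev homComplexMap : homComplex (R := R) P Y ⟶ homComplex P' Y :=
  unopMap ((((linearYoneda R C).obj Y).rightOp.mapHomologicalComplex _).map φ.hom)

lemma cocycleHom_cyclesMap (z : (homComplex P Y).cycles n) :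
    cocycleHom P' Y n (HomologicalComplex.cyclesMap (homComplexMap R φ Y) n z) =
      φ.hom.f n ≫ cocycleHom P Y n z :=
  ConcreteCategory.congr_hom (HomologicalComplex.cyclesMap_i (homComplexMap R φ Y) n) z

lemma mk₀_comp_extOfCocycle [HasExt.{w} C] (z : (homComplex P Y).cycles n) :
    (Abelian.Ext.mk₀ g).comp (extOfCocycle P Y n z) (zero_add n) =
      extOfCocycle P' Y n (HomologicalComplex.cyclesMap (homComplexMap R φ Y) n z) := by
  refine (ProjectiveResolution.mk₀_comp_extMk _ (n + 1) rfl (d_comp_cocycleHom z) φ).trans ?_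
  simp only [← cocycleHom_cyclesMap φ Y n z]
  rfl

variable [EnoughProjectives C]

lemma isoExt_inv_naturality :
    (P.isoExt n Y).inv ≫ ((Ext R C n).map g.op).app Y =
      HomologicalComplex.homologyMap (homComplexMap R φ Y) n ≫ (P'.isoExt n Y).inv := by
  let F := ((linearYoneda R C).obj Y).rightOp
  let φF := (F.mapHomologicalComplex _).map φ.hom
  have hcomm : φ.hom.f 0 ≫ P.π.f 0 = P'.π.f 0 ≫ g := by simpa using φ.hom_f_zero_comp_π_f_zero
  have hderived : (P.isoLeftDerivedObj F n).hom.unop ≫ ((F.leftDerived n).map g).unop =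
      (HomologicalComplex.homologyMap φF n).unop ≫ (P'.isoLeftDerivedObj F n).hom.unop :=
    congrArg Quiver.Hom.unop <|
      ProjectiveResolution.isoLeftDerivedObj_hom_naturality g P' P φ.hom hcomm F n
  exact (CommSq.horiz_comp ⟨homologyUnop_hom_naturality φF n⟩ ⟨hderived⟩).w

lemma derivedExt_map_derivedExtOfCocycle (z : (homComplex P Y).cycles n) :
    ((Ext R C n).map g.op).app Y (derivedExtOfCocycle P Y n z) =
      derivedExtOfCocycle P' Y n (HomologicalComplex.cyclesMap (homComplexMap R φ Y) n z) := by
  have h : ((homComplex (R := R) P Y).homologyπ n ≫ (P.isoExt n Y).inv) ≫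
      ((Ext R C n).map g.op).app Y = HomologicalComplex.cyclesMap (homComplexMap R φ Y) n ≫
        (homComplex P' Y).homologyπ n ≫ (P'.isoExt n Y).inv := by
    rw [Category.assoc, isoExt_inv_naturality φ, HomologicalComplex.homologyπ_naturality_assoc]
  exact ConcreteCategory.congr_hom h z

variable (P P' g) in
lemma extEquivDerivedExt_mk₀_comp [HasExt.{w} C] (e : Abelian.Ext X Y n) :
    extEquivDerivedExt P' Y n ((Abelian.Ext.mk₀ g).comp e (zero_add n)) =
      ((Ext R C n).map g.op).app Y (extEquivDerivedExt P Y n e) := by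
  let φ : ProjectiveResolution.Hom P' P g :=
    { hom := ProjectiveResolution.lift g P' P
      hom_f_zero_comp_π_f_zero := by
        simpa using ProjectiveResolution.lift_commutes_zero g P' P }
  obtain ⟨z, rfl⟩ := extOfCocycle_surjective (R := R) P Y n e
  rw [mk₀_comp_extOfCocycle φ, extEquivDerivedExt_extOfCocycle, extEquivDerivedExt_extOfCocycle,
    derivedExt_map_derivedExtOfCocycle φ]

end Naturality

end Comparison

lemma mk₀_comp_extClass_comp {C : Type u} [Category.{v} C] [Abelian C] [HasExt.{w} C]
    {S S' : ShortComplex C} (hS : S.ShortExact) (hS' : S'.ShortExact) (φ : S ⟶ S') {Y : C} {i : ℕ}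
    (e : Abelian.Ext S'.X₁ Y i) :
    (Abelian.Ext.mk₀ φ.τ₃).comp (hS'.extClass.comp e (add_comm 1 i)) (zero_add _) =
      hS.extClass.comp ((Abelian.Ext.mk₀ φ.τ₁).comp e (zero_add i)) (add_comm 1 i) :=
  calc
    _ = ((Abelian.Ext.mk₀ φ.τ₃).comp hS'.extClass (zero_add 1)).comp e (add_comm 1 i) :=
      (Abelian.Ext.comp_assoc _ _ _ (zero_add 1) (add_comm 1 i) (by lia)).symm
    _ = _ := by
      rw [← hS.extClass_naturality hS' φ]
      exact Abelian.Ext.comp_assoc _ _ _ (add_zero 1) (zero_add i) (by lia)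

section ExtColim

variable {R : Type u} [CommRing R] {L : Type u} [AddCommGroup L] [Module R L]

/-- The restriction map `Ext^i(B, X) → Ext^i(A, X)` along an inclusion `A ≤ B` of submodules. -/
noncomputable def extRestrict {A B : Submodule R L} (h : A ≤ B) (X : ModuleCat.{u} R) (i : ℕ) :
    Abelian.Ext.{u} (ModuleCat.of R B) X i →+ Abelian.Ext.{u} (ModuleCat.of R A) X i :=
  (Abelian.Ext.mk₀ (ModuleCat.ofHom (Submodule.inclusion h))).precomp X (zero_add i)

variable {A B D : Submodule R L} {X Y : ModuleCat.{u} R} {i : ℕ}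

lemma extRestrict_extRestrict (h : A ≤ B) (h' : B ≤ D) (e : Abelian.Ext (ModuleCat.of R D) X i) :
    extRestrict h X i (extRestrict h' X i e) = extRestrict (h.trans h') X i e :=
  Abelian.Ext.mk₀_comp_mk₀_assoc ..

lemma extRestrict_comp {j k : ℕ} (h : A ≤ B) (e : Abelian.Ext (ModuleCat.of R B) X i)
    (e' : Abelian.Ext X Y j) (hk : i + j = k) :
    extRestrict h Y k (e.comp e' hk) = (extRestrict h X i e).comp e' hk :=
  (Abelian.Ext.comp_assoc _ _ _ (zero_add i) hk (by lia)).symm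

/-- The direct limit of the modules `Ext^i(A n, X)` along the inclusions between the submodules
`A n` vanishes; this is expressed elementwise. -/
def ExtColimVanishes {ι : Type*} (A : ι → Submodule R L) (X : ModuleCat.{u} R) (i : ℕ) : Prop :=
  ∀ n (e : Abelian.Ext (ModuleCat.of R (A n)) X i), ∃ m, ∃ h : A m ≤ A n, extRestrict h X i e = 0

namespace ExtColimVanishes

variable {ι κ : Type*} {A : ι → Submodule R L}

lemma of_cofinal {B : κ → Submodule R L} (hA : ExtColimVanishes A X i)
    (hAB : ∀ n, ∃ m, A m ≤ B n) (hBA : ∀ n, ∃ m, B m ≤ A n) : ExtColimVanishes B X i := by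
  intro n e
  obtain ⟨m, hm⟩ := hAB n
  obtain ⟨l, hlm, hl⟩ := hA m (extRestrict hm X i e)
  obtain ⟨k, hkl⟩ := hBA l
  refine ⟨k, hkl.trans (hlm.trans hm), ?_⟩
  rw [← extRestrict_extRestrict hkl (hlm.trans hm), ← extRestrict_extRestrict hlm hm, hl, map_zero]

lemma eventually [Preorder ι] (hA : ExtColimVanishes A X i) (hanti : Antitone A)
    (n : ι) (e : Abelian.Ext (ModuleCat.of R (A n)) X i) :
    ∀ᶠ m in Filter.atTop, ∃ h : A m ≤ A n, extRestrict h X i e = 0 := by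
  obtain ⟨m, hmn, hm⟩ := hA n e
  filter_upwards [Filter.eventually_ge_atTop m] with l hl
  exact ⟨(hanti hl).trans hmn, by rw [← extRestrict_extRestrict (hanti hl) hmn, hm, map_zero]⟩

section ShortExact

variable {S : ShortComplex (ModuleCat.{u} R)} (hS : S.ShortExact)
include hS

lemma middle (h₁ : ExtColimVanishes A S.X₁ i) (h₃ : ExtColimVanishes A S.X₃ i) :
    ExtColimVanishes A S.X₂ i := by
  intro n e
  obtain ⟨m, hmn, hm⟩ := h₃ n (e.comp (.mk₀ S.g) (add_zero i))
  rw [extRestrict_comp] at hm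
  obtain ⟨e₁, he₁⟩ := Abelian.Ext.covariant_sequence_exact₂ _ hS _ hm
  obtain ⟨l, hlm, hl⟩ := h₁ m e₁
  refine ⟨l, hlm.trans hmn, ?_⟩
  rw [← extRestrict_extRestrict hlm hmn, ← he₁, extRestrict_comp, hl, Abelian.Ext.zero_comp]

lemma right (h₂ : ExtColimVanishes A S.X₂ i) (h₁ : ExtColimVanishes A S.X₁ (i + 1)) :
    ExtColimVanishes A S.X₃ i := by
  intro n e
  obtain ⟨m, hmn, hm⟩ := h₁ n (e.comp hS.extClass rfl)
  rw [extRestrict_comp] at hm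
  obtain ⟨e₂, he₂⟩ := Abelian.Ext.covariant_sequence_exact₃ _ hS _ rfl hm
  obtain ⟨l, hlm, hl⟩ := h₂ m e₂
  refine ⟨l, hlm.trans hmn, ?_⟩
  rw [← extRestrict_extRestrict hlm hmn, ← he₂, extRestrict_comp, hl, Abelian.Ext.zero_comp]

end ShortExact

end ExtColimVanishes

section MayerVietoris

/-- The Mayer–Vietoris sequence `0 → A ∩ B → A × B → A + B → 0`. -/
abbrev mayerVietoris (A B : Submodule R L) : ShortComplex (ModuleCat.{u} R) :=
  ShortComplex.mk
    (ModuleCat.ofHom ((Submodule.inclusion (inf_le_left (a := A) (b := B))).prod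
      (-Submodule.inclusion inf_le_right)))
    (ModuleCat.ofHom ((Submodule.inclusion le_sup_left).coprod
      (Submodule.inclusion (le_sup_right (a := A) (b := B)))))
    (by ext x; exact add_neg_cancel (x : L))

lemma mayerVietoris_shortExact (A B : Submodule R L) : (mayerVietoris A B).ShortExact where
  exact := by
    refine (ShortComplex.moduleCat_exact_iff _).2 ?_
    rintro ⟨⟨a, ha⟩, ⟨b, hb⟩⟩ h
    have hab : a + b = 0 := congrArg Subtype.val h
    obtain rfl : b = -a := (neg_eq_of_add_eq_zero_right hab).symm
    exact ⟨⟨a, ha, neg_mem_iff.1 hb⟩, rfl⟩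
  mono_f := (ModuleCat.mono_iff_injective _).2 fun _ _ h =>
    Subtype.ext (congrArg (fun z : A × B => (z.1 : L)) h)
  epi_g := by
    refine (ModuleCat.epi_iff_surjective _).2 ?_
    rintro ⟨x, hx⟩
    obtain ⟨a, ha, b, hb, rfl⟩ := Submodule.mem_sup.1 hx
    exact ⟨(⟨a, ha⟩, ⟨b, hb⟩), rfl⟩

/-- The map between Mayer–Vietoris sequences induced by inclusions `A' ≤ A` and `B' ≤ B`. -/
def mayerVietorisMap {A' B' : Submodule R L} (hA : A' ≤ A) (hB : B' ≤ B) :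
    mayerVietoris A' B' ⟶ mayerVietoris A B where
  τ₁ := ModuleCat.ofHom (Submodule.inclusion (inf_le_inf hA hB))
  τ₂ := ModuleCat.ofHom ((Submodule.inclusion hA).prodMap (Submodule.inclusion hB))
  τ₃ := ModuleCat.ofHom (Submodule.inclusion (sup_le_sup hA hB))

lemma ext_prod_eq_zero {M N : Type u} [AddCommGroup M] [AddCommGroup N] [Module R M] [Module R N]
    {e : Abelian.Ext.{u} (ModuleCat.of R (M × N)) X i}
    (hinl : (Abelian.Ext.mk₀ (ModuleCat.ofHom (LinearMap.inl R M N))).comp e (zero_add i) = 0)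
    (hinr : (Abelian.Ext.mk₀ (ModuleCat.ofHom (LinearMap.inr R M N))).comp e (zero_add i) = 0) :
    e = 0 := by
  have hid : 𝟙 (ModuleCat.of R (M × N)) =
      ModuleCat.ofHom (LinearMap.fst R M N) ≫ ModuleCat.ofHom (LinearMap.inl R M N) +
      ModuleCat.ofHom (LinearMap.snd R M N) ≫ ModuleCat.ofHom (LinearMap.inr R M N) := by
    ext x <;> simp
  rw [← Abelian.Ext.mk₀_id_comp e, hid, Abelian.Ext.mk₀_add, Abelian.Ext.add_comp,
    ← Abelian.Ext.mk₀_comp_mk₀_assoc, ← Abelian.Ext.mk₀_comp_mk₀_assoc, hinl, hinr,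
    Abelian.Ext.comp_zero, Abelian.Ext.comp_zero, add_zero]

/-- The connecting homomorphism of the Mayer–Vietoris sequence. -/
noncomputable def mayerVietorisδ (A B : Submodule R L) (X : ModuleCat.{u} R) (i : ℕ) :
    Abelian.Ext.{u} (ModuleCat.of R (A ⊓ B : Submodule R L)) X i →+
      Abelian.Ext.{u} (ModuleCat.of R (A ⊔ B : Submodule R L)) X (i + 1) :=
  (mayerVietoris_shortExact A B).extClass.precomp X (add_comm 1 i)

lemma extRestrict_mayerVietorisδ {A' B' : Submodule R L} (hA : A' ≤ A) (hB : B' ≤ B)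
    (e : Abelian.Ext (ModuleCat.of R (A ⊓ B : Submodule R L)) X i) :
    extRestrict (sup_le_sup hA hB) X (i + 1) (mayerVietorisδ A B X i e) =
      mayerVietorisδ A' B' X i (extRestrict (inf_le_inf hA hB) X i e) :=
  mk₀_comp_extClass_comp (mayerVietoris_shortExact A' B') (mayerVietoris_shortExact A B)
    (mayerVietorisMap hA hB) e

lemma exists_mayerVietorisδ_eq (e : Abelian.Ext (ModuleCat.of R (A ⊔ B : Submodule R L)) X (i + 1))
    (hA : extRestrict le_sup_left X (i + 1) e = 0) (hB : extRestrict le_sup_right X (i + 1) e = 0) :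
    ∃ e', mayerVietorisδ A B X i e' = e := by
  have hinl : ModuleCat.ofHom (LinearMap.inl R A B) ≫ (mayerVietoris A B).g =
      ModuleCat.ofHom (Submodule.inclusion le_sup_left) := by
    ext; simp
  have hinr : ModuleCat.ofHom (LinearMap.inr R A B) ≫ (mayerVietoris A B).g =
      ModuleCat.ofHom (Submodule.inclusion le_sup_right) := by
    ext; simp
  refine Abelian.Ext.contravariant_sequence_exact₃ (mayerVietoris_shortExact A B) X e
    (ext_prod_eq_zero ?_ ?_) (add_comm 1 i)
  · rwa [Abelian.Ext.mk₀_comp_mk₀_assoc, hinl]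
  · rwa [Abelian.Ext.mk₀_comp_mk₀_assoc, hinr]

lemma ExtColimVanishes.sup {ι : Type*} [SemilatticeSup ι] {A B : ι → Submodule R L}
    (hA : Antitone A) (hB : Antitone B)
    (hAX : ExtColimVanishes A X (i + 1)) (hBX : ExtColimVanishes B X (i + 1))
    (hABX : ExtColimVanishes (A ⊓ B) X i) : ExtColimVanishes (A ⊔ B) X (i + 1) := by
  intro n e
  have : Nonempty ι := ⟨n⟩
  obtain ⟨m, ⟨hmA, hA₀⟩, ⟨hmB, hB₀⟩⟩ := ((hAX.eventually hA n (extRestrict le_sup_left X _ e)).and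
    (hBX.eventually hB n (extRestrict le_sup_right X _ e))).exists
  obtain ⟨e', he'⟩ := exists_mayerVietorisδ_eq (extRestrict (sup_le_sup hmA hmB) X (i + 1) e)
    (by rwa [extRestrict_extRestrict] at hA₀ ⊢) (by rwa [extRestrict_extRestrict] at hB₀ ⊢)
  obtain ⟨l, ⟨hlm, hl⟩, hml⟩ := ((hABX.eventually (hA.inf hB) m e').and
    (Filter.eventually_ge_atTop m)).exists
  have hres := extRestrict_mayerVietorisδ (hA hml) (hB hml) e'
  refine ⟨l, sup_le_sup ((hA hml).trans hmA) ((hB hml).trans hmB), ?_⟩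
  calc
    _ = extRestrict (sup_le_sup (hA hml) (hB hml)) X (i + 1) (mayerVietorisδ _ _ X i e') := by
      rw [he', extRestrict_extRestrict]
    _ = 0 := by rw [hres, show extRestrict _ X i e' = 0 from hl, map_zero]

end MayerVietoris

end ExtColim

section Powers

lemma mk₀_comp_comp_eq_zero {C : Type u} [Category.{v} C] [Abelian C] [HasExt.{w} C]
    {A B P X : C} [Projective P] (f : A ⟶ P) (g : P ⟶ B) {i : ℕ} (e : Abelian.Ext B X (i + 1)) :
    (Abelian.Ext.mk₀ (f ≫ g)).comp e (zero_add _) = 0 := by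
  rw [← Abelian.Ext.mk₀_comp_mk₀_assoc,
    Abelian.Ext.eq_zero_of_projective ((Abelian.Ext.mk₀ g).comp e _), Abelian.Ext.comp_zero]

variable {R : Type u} [CommRing R]

lemma exists_comp_eq_inclusion_span_singleton {a b c : R} (hc : b * a = c)
    (hab : ∀ r, b * (a * r) = 0 → a * r = 0) (h : Ideal.span {c} ≤ Ideal.span {b}) :
    ∃ (f : Ideal.span {c} →ₗ[R] R) (g : R →ₗ[R] Ideal.span {b}),
      g ∘ₗ f = Submodule.inclusion h := by
  subst hc
  -- Multiplication by `b` maps `(a)` isomorphically onto `(b * a)`, so division by `b` is a map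
  -- from `(b * a)` to `R`.
  let mulb : Ideal.span {a} →ₗ[R] Ideal.span {b * a} :=
    (LinearMap.mulLeft R b).restrict fun y hy =>
      Ideal.mem_span_singleton.2 (mul_dvd_mul_left b (Ideal.mem_span_singleton.1 hy))
  have mulb_bijective : Function.Bijective mulb := by
    constructor
    · refine (injective_iff_map_eq_zero _).2 ?_
      rintro ⟨y, hy⟩ hy₀
      obtain ⟨r, rfl⟩ := Ideal.mem_span_singleton.1 hy
      exact Subtype.ext (hab r (congrArg Subtype.val hy₀))
    · rintro ⟨y, hy⟩
      obtain ⟨r, rfl⟩ := Ideal.mem_span_singleton.1 hy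
      exact ⟨⟨a * r, Ideal.mem_span_singleton.2 (dvd_mul_right a r)⟩,
        Subtype.ext (mul_assoc b a r).symm⟩
  let ε := LinearEquiv.ofBijective mulb mulb_bijective
  refine ⟨(Ideal.span {a}).subtype ∘ₗ ε.symm.toLinearMap,
    LinearMap.toSpanSingleton R _ ⟨b, Ideal.mem_span_singleton_self b⟩, ?_⟩
  ext y
  calc (ε.symm y : R) * b = mulb (ε.symm y) := mul_comm _ _
    _ = y := congrArg Subtype.val (ε.apply_symm_apply y)

variable {X : ModuleCat.{u} R} {i : ℕ}

namespace ExtColimVanishes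

lemma pow_bot : ExtColimVanishes (fun n => (⊥ : Ideal R) ^ n) X i := by
  intro n e
  refine ⟨n + 1, Ideal.pow_le_pow_right n.le_succ, ?_⟩
  have : Subsingleton ((⊥ : Ideal R) ^ (n + 1) : Ideal R) := by
    rw [pow_succ, Ideal.mul_bot]
    infer_instance
  rw [extRestrict, (ModuleCat.isZero_of_subsingleton _).eq_of_src (ModuleCat.ofHom _) 0,
    Abelian.Ext.mk₀_zero]
  exact Abelian.Ext.zero_comp _ 0 e i (zero_add i)

variable [IsNoetherianRing R]

lemma pow_span_singleton (x : R) : ExtColimVanishes (fun n => Ideal.span {x} ^ n) X (i + 1) := by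
  simp only [Ideal.span_singleton_pow]
  intro n e
  obtain ⟨c, hc⟩ := (LinearMap.eventually_iSup_ker_pow_eq (LinearMap.mulLeft R x)).exists
  have hann (r : R) (hr : x ^ n * (x ^ c * r) = 0) : x ^ c * r = 0 := by
    have hr_mem : r ∈ ⨆ m, LinearMap.ker (LinearMap.mulLeft R x ^ m) :=
      Submodule.mem_iSup_of_mem (n + c) <| by
        rwa [LinearMap.pow_mulLeft, LinearMap.mem_ker, LinearMap.mulLeft_apply, pow_add, mul_assoc]
    rwa [hc, LinearMap.pow_mulLeft] at hr_mem
  have hle : Ideal.span {x ^ (n + c)} ≤ Ideal.span {x ^ n} :=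
    Ideal.span_singleton_le_span_singleton.2 (pow_dvd_pow x (n.le_add_right c))
  obtain ⟨f, g, hgf⟩ := exists_comp_eq_inclusion_span_singleton (pow_add x n c).symm hann hle
  refine ⟨n + c, hle, ?_⟩
  rw [extRestrict, ← hgf]
  exact mk₀_comp_comp_eq_zero (ModuleCat.ofHom f) (ModuleCat.ofHom g) e

lemma inf_pow {J K : Ideal R} (h : ExtColimVanishes (fun n => (J * K) ^ n) X i) :
    ExtColimVanishes ((fun n => J ^ n) ⊓ fun n => K ^ n) X i := by
  refine h.of_cofinal (fun n => ⟨n, ?_⟩) (fun n => ?_)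
  · rw [mul_pow]
    exact Ideal.mul_le_inf
  · -- Artin–Rees for the ideal `K ^ n` and the `J`-adic filtration
    obtain ⟨k, hk⟩ := Ideal.exists_pow_inf_eq_pow_smul J (K ^ n)
    refine ⟨n + k, ?_⟩
    calc J ^ (n + k) ⊓ K ^ (n + k)
      _ ≤ J ^ (n + k) • ⊤ ⊓ K ^ n := by
        rw [smul_eq_mul, Ideal.mul_top]
        exact inf_le_inf_left _ (Ideal.pow_le_pow_right (n.le_add_right k))
      _ = J ^ n * (J ^ k • ⊤ ⊓ K ^ n) := by
        rw [hk (n + k) (Nat.le_add_left k n), Nat.add_sub_cancel, smul_eq_mul]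
      _ ≤ (J * K) ^ n := by
        rw [mul_pow]
        exact Ideal.mul_mono_right inf_le_right

lemma pow_sup {J K : Ideal R} (hJ : ExtColimVanishes (fun n => J ^ n) X (i + 1))
    (hK : ExtColimVanishes (fun n => K ^ n) X (i + 1))
    (hJK : ExtColimVanishes (fun n => (J * K) ^ n) X i) :
    ExtColimVanishes (fun n => (J ⊔ K) ^ n) X (i + 1) := by
  have antitone_pow (I : Ideal R) : Antitone (fun n => I ^ n) := fun _ _ => Ideal.pow_le_pow_right
  refine (hJ.sup (antitone_pow J) (antitone_pow K) hK hJK.inf_pow).of_cofinal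
    (fun n => ⟨n, ?_⟩) (fun n => ⟨n + n, Ideal.sup_pow_add_le_pow_sup_pow⟩)
  exact sup_le (Ideal.pow_right_mono le_sup_left n) (Ideal.pow_right_mono le_sup_right n)

lemma pow_span_range {k : ℕ} (x : Fin k → R) (hki : k ≤ i) :
    ExtColimVanishes (fun n => Ideal.span (Set.range x) ^ n) X i := by
  induction k generalizing i with
  | zero =>
    rw [Set.range_eq_empty, Ideal.span_empty]
    exact pow_bot
  | succ k ih =>
    obtain ⟨i, rfl⟩ := Nat.exists_eq_add_of_le' (Nat.le_of_add_left_le hki)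
    have hmul : Ideal.span {x 0} * Ideal.span (Set.range (Fin.tail x)) =
        Ideal.span (Set.range fun j => x 0 * Fin.tail x j) := by
      rw [Ideal.span_mul_span', Set.singleton_mul, ← Set.range_comp]
      rfl
    have hspan : Ideal.span (Set.range x) =
        Ideal.span {x 0} ⊔ Ideal.span (Set.range (Fin.tail x)) := by
      rw [← Ideal.span_insert, ← Fin.range_cons, Fin.cons_self_tail]
    simp only [hspan]
    exact (pow_span_singleton (x 0)).pow_sup (ih _ (by lia))
      (by simpa only [hmul] using ih _ (by lia))

end ExtColimVanishes

lemma exists_forall_extColimVanishes [IsNoetherianRing R] (I : Ideal R) :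
    ∃ k, ∀ (X : ModuleCat.{u} R) (i : ℕ), k ≤ i → ExtColimVanishes (fun n => I ^ n) X i := by
  obtain ⟨k, x, rfl⟩ := Submodule.fg_iff_exists_fin_generating_family.1 (IsNoetherian.noetherian I)
  exact ⟨k, fun X i => ExtColimVanishes.pow_span_range x⟩

end Powers

section QuotientSequence

variable {R : Type u} [Ring R] {M : Type v} [AddCommGroup M] [Module R M]

/-- The short exact sequence `0 → K → M → M ⧸ K → 0` of a submodule `K` of `M`. -/
abbrev quotientSequence (K : Submodule R M) : ShortComplex (ModuleCat.{v} R) :=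
  ModuleCat.shortComplexOfCompEqZero K.subtype K.mkQ
    (LinearMap.exact_subtype_mkQ K).linearMap_comp_eq_zero

lemma quotientSequence_shortExact (K : Submodule R M) : (quotientSequence K).ShortExact :=
  ModuleCat.shortComplex_shortExact _ (LinearMap.exact_subtype_mkQ K) K.injective_subtype
    K.mkQ_surjective

end QuotientSequence

lemma support_subset_zeroLocus_of_pow_le_annihilator {R M : Type*} [CommRing R]
    [AddCommGroup M] [Module R M] {I : Ideal R} {m : ℕ} (h : I ^ m ≤ Module.annihilator R M) :
    Module.support R M ⊆ PrimeSpectrum.zeroLocus I :=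
  fun p hp => p.2.le_of_pow_le (h.trans (Module.annihilator_le_of_mem_support hp))

section FiniteExt

lemma finite_of_ker_le_range {R A B D : Type*} [Ring R] [IsNoetherianRing R] [AddCommGroup A]
    [AddCommGroup B] [AddCommGroup D] [Module R A] [Module R B] [Module R D]
    [Module.Finite R A] [Module.Finite R D] {f : A →ₗ[R] B} {g : B →ₗ[R] D}
    (h : LinearMap.ker g ≤ LinearMap.range f) : Module.Finite R B := by
  have := isNoetherian_of_le h
  have := isNoetherian_of_range_eq_ker (LinearMap.ker g).subtype g (Submodule.range_subtype _)
  infer_instance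

section Abelian

open Abelian

variable {R : Type*} [CommRing R] [IsNoetherianRing R] {C : Type u} [Category.{v} C] [Abelian C]
  [Linear R C] [HasExt.{w} C] {S : ShortComplex C} (hS : S.ShortExact) {Y : C} {n : ℕ}
include hS

lemma finite_ext_X₂ (h₁ : Module.Finite R (Ext S.X₁ Y n)) (h₃ : Module.Finite R (Ext S.X₃ Y n)) :
    Module.Finite R (Ext S.X₂ Y n) := by
  refine finite_of_ker_le_range (f := (Ext.mk₀ S.g).precompOfLinear R Y (zero_add n))
    (g := (Ext.mk₀ S.f).precompOfLinear R Y (zero_add n)) fun e he => ?_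
  exact Ext.contravariant_sequence_exact₂ hS Y e he

lemma finite_ext_X₃ (h₂ : Module.Finite R (Ext S.X₂ Y n))
    (h₁ : ∀ i, i + 1 = n → Module.Finite R (Ext S.X₁ Y i)) : Module.Finite R (Ext S.X₃ Y n) := by
  let precomp_g := (Ext.mk₀ S.g).precompOfLinear R Y (zero_add n)
  cases n with
  | zero =>
    have := hS.epi_g
    exact Module.Finite.of_injective precomp_g (Ext.precomp_mk₀_injective_of_epi Y S.g)
  | succ i =>
    have := h₁ i rfl
    refine finite_of_ker_le_range (f := hS.extClass.precompOfLinear R Y (add_comm 1 i))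
      (g := precomp_g) fun e he => ?_
    exact Ext.contravariant_sequence_exact₃ hS Y e he (add_comm 1 i)

lemma finite_ext_X₁ (h₂ : Module.Finite R (Ext Y S.X₂ n))
    (h₃ : ∀ i, i + 1 = n → Module.Finite R (Ext Y S.X₃ i)) : Module.Finite R (Ext Y S.X₁ n) := by
  let postcomp_f := (Ext.mk₀ S.f).postcompOfLinear R Y (add_zero n)
  cases n with
  | zero =>
    have := hS.mono_f
    exact Module.Finite.of_injective postcomp_f (Ext.postcomp_mk₀_injective_of_mono Y S.f)
  | succ i =>
    have := h₃ i rfl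
    refine finite_of_ker_le_range (f := hS.extClass.postcompOfLinear R Y rfl)
      (g := postcomp_f) fun e he => ?_
    exact Ext.covariant_sequence_exact₁ Y hS e he rfl

end Abelian

lemma finite_ext_of_extRestrict_eq_zero {R : Type u} [CommRing R] {L : Type u} [AddCommGroup L]
    [Module R L] {A B : Submodule R L} (h : A ≤ B) {X : ModuleCat.{u} R} {i : ℕ}
    (hzero : ∀ e, extRestrict h X i e = 0)
    [Module.Finite R (Abelian.Ext (ModuleCat.of R (B ⧸ A.submoduleOf B)) X i)] :
    Module.Finite R (Abelian.Ext (ModuleCat.of R B) X i) := by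
  have hexact : Function.Exact (Submodule.inclusion h) (A.submoduleOf B).mkQ := by
    rw [LinearMap.exact_iff, Submodule.ker_mkQ, Submodule.range_inclusion]
    rfl
  have hS := ModuleCat.shortComplex_shortExact
    (ModuleCat.shortComplexOfCompEqZero _ _ hexact.linearMap_comp_eq_zero) hexact
    (Submodule.inclusion_injective h) (A.submoduleOf B).mkQ_surjective
  exact .of_surjective ((Abelian.Ext.mk₀ (ModuleCat.ofHom (A.submoduleOf B).mkQ)).precompOfLinear
    R X (zero_add i)) fun e => Abelian.Ext.contravariant_sequence_exact₂ hS X e (hzero e)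

theorem finite_ext_of_support_subset {R : Type u} [CommRing R] [IsNoetherianRing R] {I : Ideal R}
    {X : ModuleCat.{u} R} {j : ℕ}
    (h : ∀ i ≤ j, Module.Finite R (Abelian.Ext (ModuleCat.of R (R ⧸ I)) X i))
    (N : Type u) [AddCommGroup N] [Module R N] [Module.Finite R N]
    (hN : Module.support R N ⊆ PrimeSpectrum.zeroLocus I) :
    Module.Finite R (Abelian.Ext (ModuleCat.of R N) X j) := by
  induction j using Nat.strong_induction_on generalizing N with | _ j ih => ?_
  have of_surjective {N : Type u} [AddCommGroup N] [Module R N] (g : (R ⧸ I) →ₗ[R] N)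
      (hg : Function.Surjective g) : Module.Finite R (Abelian.Ext (ModuleCat.of R N) X j) := by
    refine finite_ext_X₃ (LinearMap.shortExact_shortComplexKer hg) (h j le_rfl) fun i hij => ?_
    refine ih i (by lia) (fun l hl => h l (by lia)) _ ?_
    refine (Module.support_subset_of_injective _ (LinearMap.ker g).injective_subtype).trans ?_
    rw [Module.support_eq_zeroLocus, Ideal.annihilator_quotient]
  revert hN
  induction ‹Module.Finite R N› using
    IsNoetherianRing.induction_on_isQuotientEquivQuotientPrime R with
  | subsingleton N => exact fun _ => of_surjective 0 (Function.surjective_to_subsingleton _)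
  | quotient N p e =>
    intro hN
    have hIp : I ≤ p.asIdeal := hN <| by
      rw [e.support_eq, Module.support_eq_zeroLocus, Ideal.annihilator_quotient]
      exact Set.Subset.rfl
    exact of_surjective (e.symm.toLinearMap ∘ₗ Submodule.factor hIp)
      (e.symm.surjective.comp (Submodule.factor_surjective hIp))
  | exact N₁ N₂ N₃ f g hf hg hfg h₁ h₃ =>
    intro hN
    rw [Module.support_of_exact hfg hf hg, Set.union_subset_iff] at hN
    exact finite_ext_X₂ (ModuleCat.shortComplex_shortExact
      (ModuleCat.shortComplexOfCompEqZero f g hfg.linearMap_comp_eq_zero) hfg hf hg)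
      (h₁ hN.1) (h₃ hN.2)

end FiniteExt

section Factorization

variable {R : Type u} [CommRing R] [IsNoetherianRing R] {I : Ideal R}

lemma ExtColimVanishes.of_finite_of_succ {L : Type u} [AddCommGroup L] [Module R L] {ι : Type*}
    {A : ι → Submodule R L} {i : ℕ} (hR : ExtColimVanishes A (ModuleCat.of R R) i)
    (hsucc : ∀ (K : Type u) [AddCommGroup K] [Module R K] [Module.Finite R K],
      ExtColimVanishes A (ModuleCat.of R K) (i + 1))
    (X : Type u) [AddCommGroup X] [Module R X] [Module.Finite R X] :
    ExtColimVanishes A (ModuleCat.of R X) i := by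
  have of_surjective {X : Type u} [AddCommGroup X] [Module R X] (g : R →ₗ[R] X)
      (hg : Function.Surjective g) : ExtColimVanishes A (ModuleCat.of R X) i :=
    .right (LinearMap.shortExact_shortComplexKer hg) hR (hsucc _)
  induction ‹Module.Finite R X› using
    IsNoetherianRing.induction_on_isQuotientEquivQuotientPrime R with
  | subsingleton X => exact of_surjective 0 (Function.surjective_to_subsingleton _)
  | quotient X p e =>
    exact of_surjective (e.symm.toLinearMap ∘ₗ p.asIdeal.mkQ)
      (e.symm.surjective.comp p.asIdeal.mkQ_surjective)
  | exact X₁ X₂ X₃ f g hf hg hfg h₁ h₃ =>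
    exact .middle (ModuleCat.shortComplex_shortExact
      (ModuleCat.shortComplexOfCompEqZero f g hfg.linearMap_comp_eq_zero) hfg hf hg) h₁ h₃

lemma ExtColimVanishes.of_finite
    (hR : ∀ i, ExtColimVanishes (fun n => I ^ n) (ModuleCat.of R R) (i + 1))
    (X : Type u) [AddCommGroup X] [Module R X] [Module.Finite R X] (i : ℕ) :
    ExtColimVanishes (fun n => I ^ n) (ModuleCat.of R X) (i + 1) := by
  obtain ⟨k, hk⟩ := exists_forall_extColimVanishes I
  obtain hik | hki := le_total k i
  · exact hk _ _ (by lia)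
  · induction hki using Nat.decreasingInduction generalizing X with
    | self => exact hk _ _ k.le_succ
    | of_succ i _ ih => exact of_finite_of_succ (hR i) (fun K => ih K) X

lemma exists_pow_extRestrict_eq_zero
    (hR : ∀ i, ExtColimVanishes (fun n => I ^ n) (ModuleCat.of R R) (i + 1)) :
    ∃ m, ∃ h : I ^ m ≤ I, ∀ (X : ModuleCat.{u} R) (i : ℕ)
      (e : Abelian.Ext (ModuleCat.of R I) X (i + 1)), extRestrict h X (i + 1) e = 0 := by
  -- The class of `0 → ker π → R ^ k → I → 0` vanishes on some `I ^ m`, so the inclusion of `I ^ m`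
  -- into `I` lifts to `R ^ k`.
  obtain ⟨k, π, hπ⟩ := Module.Finite.exists_fin' R I
  have hS := LinearMap.shortExact_shortComplexKer hπ
  have hI : I ^ 1 ≤ I := (pow_one I).le
  obtain ⟨m, hm, hzero⟩ := ExtColimVanishes.of_finite hR (LinearMap.ker π) 0 1
    (extRestrict hI _ 1 hS.extClass)
  rw [extRestrict_extRestrict] at hzero
  obtain ⟨u, hu⟩ := Abelian.Ext.covariant_sequence_exact₃ _ hS _ (zero_add 1) hzero
  obtain ⟨u, rfl⟩ := (Abelian.Ext.mk₀_bijective _ _).2 u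
  rw [Abelian.Ext.mk₀_comp_mk₀] at hu
  refine ⟨m, hm.trans hI, fun X i e => ?_⟩
  rw [extRestrict, ← (Abelian.Ext.mk₀_bijective _ _).1 hu]
  exact mk₀_comp_comp_eq_zero (P := ModuleCat.of R (Fin k → R)) u (ModuleCat.ofHom π) e

theorem finite_ext_of_finite_ext_zero_one
    (hR : ∀ i, ExtColimVanishes (fun n => I ^ n) (ModuleCat.of R R) (i + 1)) {X : ModuleCat.{u} R}
    (hX : ∀ i ≤ 1, Module.Finite R (Abelian.Ext (ModuleCat.of R (R ⧸ I)) X i)) (i : ℕ) :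
    Module.Finite R (Abelian.Ext (ModuleCat.of R (R ⧸ I)) X i) := by
  obtain ⟨m, hm, hzero⟩ := exists_pow_extRestrict_eq_zero hR
  induction i using Nat.strong_induction_on with | _ i ih => ?_
  obtain hi | hi := le_or_gt i 1
  · exact hX i hi
  obtain ⟨i, rfl⟩ : ∃ j, i = j + 2 := Nat.exists_eq_add_of_le' hi
  have finite_quotient : Module.Finite R
      (Abelian.Ext (ModuleCat.of R (I ⧸ (I ^ m).submoduleOf I)) X (i + 1)) := by
    refine finite_ext_of_support_subset (I := I) (fun j hj => ih j (by lia)) _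
      (support_subset_zeroLocus_of_pow_le_annihilator (m := m) fun r hr => ?_)
    refine Module.mem_annihilator.2 fun x => ?_
    obtain ⟨y, rfl⟩ := Submodule.Quotient.mk_surjective _ x
    exact (Submodule.Quotient.mk_eq_zero _).2 (Ideal.mul_mem_right _ _ hr)
  have finite_ideal := finite_ext_of_extRestrict_eq_zero hm (hzero X i)
  have hI := quotientSequence_shortExact I
  refine Module.Finite.of_surjective (hI.extClass.precompOfLinear R X (add_comm 1 (i + 1)))
    fun e => Abelian.Ext.contravariant_sequence_exact₃ hI X e ?_ (add_comm 1 (i + 1))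
  exact Abelian.Ext.eq_zero_of_projective _

end Factorization

section LocalCohomology

variable {R : Type u} [CommRing R] {I : Ideal R}

lemma exists_derivedExt_map_mapQ_eq_zero {Y : ModuleCat.{u} R} {i : ℕ}
    [Subsingleton ((localCohomology I i).obj Y)] {n : ℕ}
    (x : ((Ext R (ModuleCat.{u} R) i).obj (.op (ModuleCat.of R (R ⧸ I ^ n)))).obj Y) :
    ∃ m, ∃ h : I ^ m ≤ I ^ n, ((Ext R (ModuleCat.{u} R) i).map (ModuleCat.ofHom
      (Submodule.mapQ (I ^ m) (I ^ n) LinearMap.id h)).op).app Y x = 0 := by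
  let F := localCohomology.diagram (localCohomology.idealPowersDiagram I) i
  let ev := (evaluation (ModuleCat.{u} R) (ModuleCat.{u} R)).obj Y
  have colimit_subsingleton : Subsingleton (ev.mapCocone (Limits.colimit.cocone F)).pt :=
    inferInstanceAs (Subsingleton ((localCohomology I i).obj Y))
  have := Limits.preservesSmallestFilteredColimits_of_preservesFilteredColimits
    (forget (ModuleCat.{u} R))
  let j : ℕᵒᵖᵒᵖ := .op (.op n)
  obtain ⟨k, f, g, hfg⟩ := Limits.Concrete.isColimit_exists_of_rep_eq (F := F ⋙ ev)
    (i := j) (j := j) (Limits.isColimitOfPreserves ev (Limits.colimit.isColimit F)) x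
    (0 : (F ⋙ ev).obj j) (Subsingleton.elim (h := colimit_subsingleton) _ _)
  refine ⟨k.unop.unop, Ideal.pow_le_pow_right f.unop.unop.down.down, ?_⟩
  exact hfg.trans (map_zero ((F ⋙ ev).map g).hom)

lemma extColimVanishes_pow_of_subsingleton_localCohomology {Y : ModuleCat.{u} R} {i : ℕ}
    [Subsingleton ((localCohomology I (i + 2)).obj Y)] :
    ExtColimVanishes (fun n => I ^ n) Y (i + 1) := by
  intro n e
  have hS (m : ℕ) := quotientSequence_shortExact (I ^ m)
  obtain ⟨m, hm, hzero⟩ := exists_derivedExt_map_mapQ_eq_zero <| extEquivDerivedExt (R := R)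
    (projectiveResolution _) Y (i + 2) ((hS n).extClass.comp e (add_comm 1 (i + 1)))
  let φ : quotientSequence (I ^ m) ⟶ quotientSequence (I ^ n) :=
    { τ₁ := ModuleCat.ofHom (Submodule.inclusion hm)
      τ₂ := 𝟙 _
      τ₃ := ModuleCat.ofHom (Submodule.mapQ (I ^ m) (I ^ n) LinearMap.id hm) }
  rw [← extEquivDerivedExt_mk₀_comp (projectiveResolution _) (projectiveResolution _),
    LinearEquiv.map_eq_zero_iff] at hzero
  have hδ := (mk₀_comp_extClass_comp (hS m) (hS n) φ e).symm.trans hzero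
  obtain ⟨e', he'⟩ := Abelian.Ext.contravariant_sequence_exact₁ (hS m) Y _ _ hδ
  refine ⟨m, hm, ?_⟩
  calc
    _ = (Abelian.Ext.mk₀ (quotientSequence (I ^ m)).f).comp e' (zero_add _) := he'.symm
    _ = 0 := by rw [Abelian.Ext.eq_zero_of_projective e', Abelian.Ext.comp_zero]

end LocalCohomology

lemma finite_ext_iff_finite_derivedExt {R : Type u} [CommRing R] (X Y : ModuleCat.{u} R) (i : ℕ) :
    Module.Finite R (Abelian.Ext X Y i) ↔
      Module.Finite R (((Ext R (ModuleCat.{u} R) i).obj (.op X)).obj Y) :=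
  Module.Finite.equiv_iff (extEquivDerivedExt (projectiveResolution X) Y i)

lemma finite_ext_ker {R : Type u} [CommRing R] [IsNoetherianRing R] {A : ModuleCat.{u} R}
    {M N : Type u} [AddCommGroup M] [Module R M] [AddCommGroup N] [Module R N] (f : M →ₗ[R] N)
    {n : ℕ} (hn : n ≤ 1) (hM : Module.Finite R (Abelian.Ext A (ModuleCat.of R M) n))
    (hN : Module.Finite R (Abelian.Ext A (ModuleCat.of R N) 0)) :
    Module.Finite R (Abelian.Ext A (ModuleCat.of R (LinearMap.ker f)) n) := by
  have hrange : Module.Finite R (Abelian.Ext A (ModuleCat.of R (LinearMap.range f)) 0) :=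
    finite_ext_X₁ (quotientSequence_shortExact (LinearMap.range f)) hN (by simp)
  have hexact : Function.Exact (LinearMap.ker f).subtype f.rangeRestrict := by
    rw [LinearMap.exact_iff, LinearMap.ker_rangeRestrict, Submodule.range_subtype]
  refine finite_ext_X₁ (ModuleCat.shortComplex_shortExact
    (ModuleCat.shortComplexOfCompEqZero _ _ hexact.linearMap_comp_eq_zero) hexact
    (LinearMap.ker f).injective_subtype f.surjective_rangeRestrict) hM fun i hi => ?_
  obtain rfl : i = 0 := by lia
  exact hrange

theorem isCofinite_ker_general {R : Type} [CommRing R] [IsNoetherianRing R] (I : Ideal R)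
    (hcd : ∀ i : ℕ, 1 < i → Subsingleton ((localCohomology I i).obj (ModuleCat.of R R)))
    {M N : Type} [AddCommGroup M] [Module R M] [AddCommGroup N] [Module R N] (f : M →ₗ[R] N)
    (hM : Module.support R M ⊆ PrimeSpectrum.zeroLocus (I : Set R))
    (hM_ext : ∀ i ≤ 1, Module.Finite R
      (((Ext R (ModuleCat R) i).obj (.op (ModuleCat.of R (R ⧸ I)))).obj (ModuleCat.of R M)))
    (hN_hom : Module.Finite R
      (((Ext R (ModuleCat R) 0).obj (.op (ModuleCat.of R (R ⧸ I)))).obj (ModuleCat.of R N))) :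
    IsCofinite I (LinearMap.ker f) := by
  refine ⟨(Module.support_subset_of_injective _ (LinearMap.ker f).injective_subtype).trans hM, ?_⟩
  simp only [← finite_ext_iff_finite_derivedExt] at hM_ext hN_hom ⊢
  have hR (i : ℕ) : ExtColimVanishes (fun n => I ^ n) (ModuleCat.of R R) (i + 1) :=
    have := hcd (i + 2) (by lia)
    extColimVanishes_pow_of_subsingleton_localCohomology
  exact finite_ext_of_finite_ext_zero_one hR fun i hi => finite_ext_ker f hi (hM_ext i hi) hN_hom

/-- If `R` is a commutative noetherian ring, `I` an ideal with `cd(I,R) ≤ 1`, and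
`f : M → N` is a homomorphism of `I`-cofinite `R`-modules, then `ker f` is
`I`-cofinite. -/
theorem isCofinite_ker {R : Type} [CommRing R] [IsNoetherianRing R] (I : Ideal R)
    (hcd : ∀ i : ℕ, 1 < i → Subsingleton ((localCohomology I i).obj (ModuleCat.of R R)))
    {M N : Type} [AddCommGroup M] [Module R M] [AddCommGroup N] [Module R N]
    (f : M →ₗ[R] N) (hM : IsCofinite I M) (hN : IsCofinite I N) :
    IsCofinite I (LinearMap.ker f) :=
  isCofinite_ker_general I hcd f hM.1 (fun i _ => hM.2 i) (hN.2 0)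
end

section
/- Let F : D(R) → D(S) be a triangulated covariant functor between derived categories of module categories, A an additive subcategory of R-modules, and B an abelian subcategory of S-modules closed under extensions. If H_i(F(M)) ∈ B for every M ∈ A and every i, then for every homologically bounded R-complex X with all homology modules in A, all homology modules H_i(F(X)) lie in B. -/
open CategoryTheory Limits DerivedCategory

/-!
Let `H` be a homological functor on a triangulated category and `B` an abelian subcategory closed
under extensions. In an exact sequence of five objects the middle one is an extension of the kernel
of the last map by the cokernel of the first, so the long exact homology sequence shows that the
objects `X` with all `Hⁿ X` in `B` form a triangulated subcategory. A bounded complex is obtained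
by finitely many extensions from shifts of its homology objects, so it lies in this triangulated
subcategory as soon as its homology objects do. The theorem is the case `H = H⁰ ∘ F`.
-/

section AbelianSubcategory

variable {D : Type*} [Category* D] [Abelian D] {B : ObjectProperty D}

lemma isClosedUnderKernels_of_prop_kernel [B.IsClosedUnderIsomorphisms]
    (hB : ∀ ⦃M N : D⦄ (f : M ⟶ N), B M → B N → B (kernel f)) : B.IsClosedUnderKernels where
  kernels_le := by
    rintro _ ⟨f, _, hk, hf⟩
    exact B.prop_of_iso ((kernelIsKernel f).conePointUniqueUpToIso hk) (hB f hf.1 hf.2)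

lemma isClosedUnderCokernels_of_prop_cokernel [B.IsClosedUnderIsomorphisms]
    (hB : ∀ ⦃M N : D⦄ (f : M ⟶ N), B M → B N → B (cokernel f)) : B.IsClosedUnderCokernels where
  cokernels_le := by
    rintro _ ⟨f, _, hk, hf⟩
    exact B.prop_of_iso ((cokernelIsCokernel f).coconePointUniqueUpToIso hk) (hB f hf.1 hf.2)

lemma prop_of_exact_of_prop_outer_four [B.IsClosedUnderIsomorphisms] [B.IsClosedUnderKernels]
    [B.IsClosedUnderCokernels] [B.IsClosedUnderExtensions]
    {n : ℕ} {S : ComposableArrows D (n + 4)} (hS : S.Exact) (k : ℕ) (hk : k ≤ n)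
    (h₀ : B (S.obj' k)) (h₁ : B (S.obj' (k + 1))) (h₃ : B (S.obj' (k + 3)))
    (h₄ : B (S.obj' (k + 4))) : B (S.obj' (k + 2)) := by
  let h := (hS.sc (k + 1)).homologyData
  have hK : B h.left.K := B.prop_of_iso (hS.opcyclesIsoCycles k ≪≫ h.left.cyclesIso)
    (B.prop_of_isColimit_cokernelCofork (hS.sc k).opcyclesIsCokernel h₀ h₁)
  have hQ : B h.right.Q :=
    B.prop_of_iso ((hS.opcyclesIsoCycles (k + 1)).symm ≪≫ h.right.opcyclesIso)
      (B.prop_of_isLimit_kernelFork (hS.sc (k + 2)).cyclesIsKernel h₃ h₄)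
  exact B.prop_X₂_of_shortExact ((hS.exact (k + 1)).shortExact h) hK hQ

end AbelianSubcategory

section HomologicalFunctor

open scoped ZeroObject

variable {T D : Type*} [Category* T] [HasShift T ℤ] [Category* D]

/-- The objects all of whose `H`-homology lies in `B`, where the `n`-th `H`-homology object is
`(H.shift n).obj X`, canonically isomorphic to `H.obj (X⟦n⟧)`. -/
def homologyIn (H : T ⥤ D) [H.ShiftSequence ℤ] (B : ObjectProperty D) : ObjectProperty T :=
  fun X ↦ ∀ n : ℤ, B ((H.shift n).obj X)

variable (H : T ⥤ D) [H.ShiftSequence ℤ] (B : ObjectProperty D) [B.IsClosedUnderIsomorphisms]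

instance : (homologyIn H B).IsClosedUnderIsomorphisms where
  of_iso e hX n := B.prop_of_iso ((H.shift n).mapIso e) (hX n)

instance : (homologyIn H B).IsStableUnderShift ℤ where
  isStableUnderShiftBy a :=
    ⟨fun X hX n ↦ B.prop_of_iso ((H.shiftIso a n (a + n) rfl).symm.app X) (hX (a + n))⟩

variable [HasZeroObject T] [Preadditive T] [∀ n : ℤ, (shiftFunctor T n).Additive]
  [Pretriangulated T] [Abelian D] [H.IsHomological]
  [B.IsClosedUnderKernels] [B.IsClosedUnderCokernels] [B.IsClosedUnderExtensions]

instance : (homologyIn H B).IsTriangulatedClosed₃ :=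
  .mk' fun Δ hΔ h₁ h₂ n ↦
    prop_of_exact_of_prop_outer_four
      (H.homologySequenceComposableArrows₅_exact Δ hΔ n (n + 1) rfl) 0 (by lia)
      (h₁ n) (h₂ n) (h₁ (n + 1)) (h₂ (n + 1))

instance [B.ContainsZero] : (homologyIn H B).IsTriangulated where
  exists_zero :=
    ⟨0, isZero_zero T, fun n ↦ B.prop_of_isZero ((H.shift n).map_isZero (isZero_zero T))⟩
  toIsTriangulatedClosed₂ := .of_isTriangulatedClosed₃

end HomologicalFunctor

section TStructure

open Triangulated

variable {T : Type*} [Category* T] [HasShift T ℤ] [HasZeroObject T] [Preadditive T]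
  [∀ n : ℤ, (shiftFunctor T n).Additive] [Pretriangulated T] [IsTriangulated T]

lemma prop_of_prop_truncGELT (t : TStructure T) (P : ObjectProperty T)
    [P.IsClosedUnderIsomorphisms] [P.ContainsZero] [P.IsTriangulatedClosed₂]
    {X : T} (hX : t.bounded X) (h : ∀ n, P ((t.truncGELT n (n + 1)).obj X)) : P X := by
  obtain ⟨⟨a, _⟩, b, _⟩ := hX
  have hLT (n : ℤ) (hn : a ≤ n) : P ((t.truncLT n).obj X) := by
    induction n, hn using Int.leInduction with
    | base => exact P.prop_of_isZero (t.isZero_truncLT_obj_of_isGE a X)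
    | succ n _ ih =>
      exact P.ext_of_isTriangulatedClosed₂ _
        (t.triangleLTLTGELT_distinguished n (n + 1) (by lia) X) ih (h n)
  have : t.IsLE X (max a b) := t.isLE_of_le X b (max a b)
  have : IsIso ((t.truncLTι (max a b + 1)).app X) :=
    (t.isLE_iff_isIso_truncLTι_app (max a b) _ rfl X).1 inferInstance
  exact P.prop_of_iso (asIso ((t.truncLTι (max a b + 1)).app X)) (hLT _ (by lia))

end TStructure

section DerivedCategory

universe w

variable {C : Type*} [Category* C] [Abelian C] [HasDerivedCategory.{w} C]

lemma bounded_iff_exists_isZero_homology (X : DerivedCategory C) :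
    TStructure.t.bounded X ↔
      ∃ a b : ℤ, ∀ i, (i < a ∨ b < i) → IsZero ((homologyFunctor C i).obj X) := by
  constructor
  · rintro ⟨⟨a, _⟩, b, _⟩
    exact ⟨a, b, fun i hi ↦ hi.elim (X.isZero_of_isGE a i ·) (X.isZero_of_isLE b i ·)⟩
  · rintro ⟨a, b, h⟩
    exact ⟨⟨a, (X.isGE_iff a).2 fun i hi ↦ h i (.inl hi)⟩,
      b, (X.isLE_iff b).2 fun i hi ↦ h i (.inr hi)⟩

lemma isIso_homologyFunctor_map_truncLTι_app (X : DerivedCategory C) {n b : ℤ} (h : n < b) :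
    IsIso ((homologyFunctor C n).map ((TStructure.t.truncLTι b).app X)) := by
  have hT := TStructure.t.triangleLTGE_distinguished b X
  have hGE (i : ℤ) (hi : i < b) :
      IsZero ((homologyFunctor C i).obj ((TStructure.t.truncGE b).obj X)) :=
    isZero_of_isGE _ b i hi
  have : Mono ((homologyFunctor C n).map ((TStructure.t.truncLTι b).app X)) :=
    (HomologySequence.mono_homologyMap_mor₁_iff _ hT (n - 1) n).2
      ((hGE (n - 1) (by lia)).eq_of_src _ _)
  have : Epi ((homologyFunctor C n).map ((TStructure.t.truncLTι b).app X)) :=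
    (HomologySequence.epi_homologyMap_mor₁_iff _ hT n).2 ((hGE n h).eq_of_tgt _ _)
  exact isIso_of_mono_of_epi _

lemma isIso_homologyFunctor_map_truncGEπ_app (X : DerivedCategory C) {n a : ℤ} (h : a ≤ n) :
    IsIso ((homologyFunctor C n).map ((TStructure.t.truncGEπ a).app X)) := by
  have hT := TStructure.t.triangleLTGE_distinguished a X
  have hLT (i : ℤ) (hi : a ≤ i) :
      IsZero ((homologyFunctor C i).obj ((TStructure.t.truncLT a).obj X)) :=
    isZero_of_isLE _ (a - 1) i (by lia)
  have : Mono ((homologyFunctor C n).map ((TStructure.t.truncGEπ a).app X)) :=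
    (HomologySequence.mono_homologyMap_mor₂_iff _ hT n).2 ((hLT n h).eq_of_src _ _)
  have : Epi ((homologyFunctor C n).map ((TStructure.t.truncGEπ a).app X)) :=
    (HomologySequence.epi_homologyMap_mor₂_iff _ hT n (n + 1)).2
      ((hLT (n + 1) (by lia)).eq_of_tgt _ _)
  exact isIso_of_mono_of_epi _

lemma nonempty_truncGELT_iso_singleFunctor (X : DerivedCategory C) (n : ℤ) :
    Nonempty ((TStructure.t.truncGELT n (n + 1)).obj X ≅
      (singleFunctor C n).obj ((homologyFunctor C n).obj X)) := by
  let Y := (TStructure.t.truncLT (n + 1)).obj X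
  let Z := (TStructure.t.truncGE n).obj Y
  have : Z.IsLE n := TStructure.t.isLE_of_le _ (n + 1 - 1) n
  obtain ⟨M, ⟨e⟩⟩ := exists_iso_singleFunctor_obj_of_isGE_of_isLE Z n
  have := isIso_homologyFunctor_map_truncLTι_app X (Int.lt_succ n)
  have := isIso_homologyFunctor_map_truncGEπ_app Y (le_refl n)
  let homologyIso : (homologyFunctor C n).obj X ≅ M :=
    (asIso ((homologyFunctor C n).map ((TStructure.t.truncLTι (n + 1)).app X))).symm ≪≫
      asIso ((homologyFunctor C n).map ((TStructure.t.truncGEπ n).app Y)) ≪≫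
      (homologyFunctor C n).mapIso e ≪≫ (singleFunctorCompHomologyFunctorIso C n).app M
  exact ⟨e ≪≫ (singleFunctor C n).mapIso homologyIso.symm⟩

lemma prop_of_prop_singleFunctor_homology (P : ObjectProperty (DerivedCategory C))
    [P.IsClosedUnderIsomorphisms] [P.IsTriangulated] {X : DerivedCategory C}
    (hX : TStructure.t.bounded X)
    (h : ∀ n, P ((singleFunctor C 0).obj ((homologyFunctor C n).obj X))) : P X := by
  refine prop_of_prop_truncGELT TStructure.t P hX fun n ↦ ?_
  obtain ⟨e⟩ := nonempty_truncGELT_iso_singleFunctor X n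
  have hn : P (((singleFunctor C n).obj ((homologyFunctor C n).obj X))⟦n⟧) :=
    P.prop_of_iso (((singleFunctors C).shiftIso n 0 n (add_zero n)).symm.app _) (h n)
  exact P.prop_of_iso e.symm ((P.prop_shift_iff_of_isStableUnderShift _ n).1 hn)

theorem wayOutLemma_bounded_general {D : Type*} [Category* D] [Abelian D]
    (H : DerivedCategory C ⥤ D) [H.IsHomological] [H.ShiftSequence ℤ]
    (B : ObjectProperty D) [B.ContainsZero] [B.IsClosedUnderIsomorphisms]
    [B.IsClosedUnderKernels] [B.IsClosedUnderCokernels] [B.IsClosedUnderExtensions]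
    {X : DerivedCategory C} (hX : TStructure.t.bounded X)
    (h : ∀ n i : ℤ, B ((H.shift i).obj ((singleFunctor C 0).obj ((homologyFunctor C n).obj X))))
    (i : ℤ) : B ((H.shift i).obj X) :=
  prop_of_prop_singleFunctor_homology (homologyIn H B) hX h i

end DerivedCategory

/-- The way-out lemma, bounded case.  Let `F : D(R) → D(S)` be a triangulated covariant
functor, `A` an additive subcategory of `R`-modules and `B` an abelian subcategory of
`S`-modules which is closed under extensions.  If all homology of `F(M)` lies in `B` for
every module `M` in `A`, then for every homologically bounded complex `X` whose homology
modules all lie in `A`, all homology modules of `F(X)` lie in `B`. -/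
theorem wayOutLemma_bounded {R S : Type} [CommRing R] [CommRing S]
    [HasDerivedCategory (ModuleCat.{0} R)] [HasDerivedCategory (ModuleCat.{0} S)]
    (F : DerivedCategory (ModuleCat R) ⥤ DerivedCategory (ModuleCat S))
    [F.CommShift ℤ] [F.IsTriangulated]
    (A : ModuleCat R → Prop) (B : ModuleCat S → Prop)
    -- `A` is an additive subcategory:
    (hAiso : ∀ (M N : ModuleCat R), (M ≅ N) → A M → A N)
    (hAzero : A (ModuleCat.of R PUnit))
    (hAprod : ∀ (M N : ModuleCat R), A M → A N → A (M ⊞ N))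
    -- `B` is an abelian subcategory, closed under extensions:
    (hBiso : ∀ (M N : ModuleCat S), (M ≅ N) → B M → B N)
    (hBzero : B (ModuleCat.of S PUnit))
    (hBker : ∀ (M N : ModuleCat S) (f : M ⟶ N), B M → B N → B (kernel f))
    (hBcoker : ∀ (M N : ModuleCat S) (f : M ⟶ N), B M → B N → B (cokernel f))
    (hBext : ∀ (c : ShortComplex (ModuleCat S)), c.ShortExact →
      B c.X₁ → B c.X₃ → B c.X₂)
    -- homology of `F` of a module in `A` lies in `B`:
    (hF : ∀ (M : ModuleCat R), A M → ∀ i : ℤ,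
      B ((homologyFunctor (ModuleCat S) i).obj
        (F.obj ((singleFunctor (ModuleCat R) 0).obj M))))
    -- `X` is homologically bounded, with homology in `A`:
    (X : DerivedCategory (ModuleCat R))
    (hXbdd : ∃ a b : ℤ, ∀ i : ℤ, (i < a ∨ b < i) →
      IsZero ((homologyFunctor (ModuleCat R) i).obj X))
    (hXA : ∀ i : ℤ, A ((homologyFunctor (ModuleCat R) i).obj X)) :
    ∀ i : ℤ, B ((homologyFunctor (ModuleCat S) i).obj (F.obj X)) := by
  have : ObjectProperty.IsClosedUnderIsomorphisms B := ⟨fun e ↦ hBiso _ _ e⟩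
  have : ObjectProperty.ContainsZero B := ⟨_, ModuleCat.isZero_of_subsingleton _, hBzero⟩
  have := isClosedUnderKernels_of_prop_kernel (B := B) hBker
  have := isClosedUnderCokernels_of_prop_cokernel (B := B) hBcoker
  have : ObjectProperty.IsClosedUnderExtensions B := ⟨fun {c} hc ↦ hBext c hc⟩
  exact wayOutLemma_bounded_general (F ⋙ homologyFunctor (ModuleCat S) 0) B
    ((bounded_iff_exists_isZero_homology X).2 hXbdd) fun n ↦ hF _ (hXA n)
end
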